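/- Let H be a locally indicable group, A a free group with basis 𝒜, and p = v⁻¹gv ∈ A where v and g are written in disjoint subsets of the basis 𝒜, g is cyclically reduced, and g is not a proper power. Let r ∈ A ∗ H be an element that is not conjugate to an element of A, not conjugate to an element of H, and not conjugate to an element of ⟨p⟩ ∗ H. Then the subgroup ⟨p⟩ ∗ H of A ∗ H maps injectively into (A ∗ H)/⟨⟨r⟩⟩ under the canonical map. -/

import Mathlib

open Monoid

/-- A group is locally indicable if every non-trivial finitely generated subgroup
surjects onto `ℤ`. -/
def LocallyIndicable (G : Type) [Group G] : Prop :=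
  ∀ H : Subgroup G, H ≠ ⊥ → H.FG →
    ∃ f : H →* Multiplicative ℤ, Function.Surjective f

/-- The basis letters occurring in the reduced word of an element of a free group. -/
def lettersOf {α : Type} [DecidableEq α] (w : FreeGroup α) : List α :=
  w.toWord.map Prod.fst

/-- An element of a free group is cyclically reduced. -/
def CyclicallyReduced {α : Type} [DecidableEq α] (g : FreeGroup α) : Prop :=
  ∀ (x : α) (b : Bool), g.toWord.head? = some (x, b) → g.toWord.getLast? ≠ some (x, !b)

/-!
Up to conjugacy, `r` is `a₁ h₁ ⋯ aₙ hₙ` with nontrivial `aᵢ ∈ A` and `hᵢ ∈ H`. It is enough to find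
homomorphisms from `A` and `H` to a group which kill this word and are jointly injective on
`⟨p⟩ ∗ H`. This is done by induction on the total length of the words `p, a₁, …, aₙ`.

Since some `aᵢ` is not a power of `p`, and `p` is not a proper power, at least two letters occur in
these words. Consider the exponent sums of `p` and of `a₁ ⋯ aₙ` in two of them. If they are linearly
independent, then Howie's theorem on equations over the locally indicable group `ℤ ∗ H` solves the
relator together with the equation that identifies `p` with the generator of `ℤ`. Otherwise some
`F : A →* ℤ` is nonzero on one of the two letters and vanishes on `p` and on `a₁ ⋯ aₙ`.

* If `F aᵢ ≠ 0` for some `i`, rewrite the relator over the kernel of `A ∗ H →* ℤ`, the free product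
  of `ker F` and of conjugates of `H`, one for each level in `ℤ`. The relator visits several levels,
  so the Freiheitssatz for free products of locally indicable groups applies with its lowest and
  with its highest level as a factor. In an HNN extension, whose stable letter raises the levels by
  one, this yields a solution over `A`.
* If all `aᵢ` lie in `ker F`, then the words become shorter when they are written in terms of the
  conjugates of the letters by powers of a letter on which `F` is nonzero. By induction there is a
  solution over `ker F`. Its product with a solution provided by the Freiheitssatz is injective on
  `ker F`, so it can be amalgamated with `A`.
-/

lemma ne_one_of_surjective {M N : Type*} [Group M] [Group N] [Nontrivial N] {f : M →* N}
    (hf : Function.Surjective f) : f ≠ 1 := by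
  rintro rfl
  obtain ⟨y, hy⟩ := exists_ne (1 : N)
  exact hy (hf y).choose_spec.symm

lemma exists_surjective_zpow_eq {P : Type*} [Group P] {f : P →* Multiplicative ℤ} (hf : f ≠ 1) :
    ∃ (g : P →* Multiplicative ℤ) (d : ℤ), Function.Surjective g ∧ d ≠ 0 ∧ ∀ x, f x = g x ^ d := by
  have : Nontrivial f.range := Subgroup.nontrivial_iff_ne_bot _ |>.2 (mt f.range_eq_bot_iff.1 hf)
  have : Infinite f.range := by
    obtain ⟨y, hy⟩ := exists_ne (1 : f.range)
    exact .of_injective _ (injective_zpow_iff_not_isOfFinOrder.2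
      (not_isOfFinOrder_of_isMulTorsionFree hy))
  let e : Multiplicative ℤ ≃* f.range := intCyclicMulEquiv
  have he (n : Multiplicative ℤ) : (e n : Multiplicative ℤ) = n ^ (e (.ofAdd 1)).1.toAdd := by
    conv_lhs => rw [← ofAdd_toAdd n, ← mul_one n.toAdd, ← smul_eq_mul, ofAdd_zsmul, map_zpow]
    exact Multiplicative.toAdd.injective (mul_comm _ _)
  refine ⟨e.symm.toMonoidHom.comp f.rangeRestrict, (e (.ofAdd 1)).1.toAdd,
    e.symm.surjective.comp f.rangeRestrict_surjective, fun hd ↦ hf ?_, fun x ↦ ?_⟩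
  · ext x
    simpa [hd] using he (e.symm (f.rangeRestrict x))
  · simp [← he]

namespace LocallyIndicable

variable {G N Q : Type} [Group G] [Group N] [Group Q]

lemma of_exists_ne_one
    (h : ∀ K : Subgroup G, K ≠ ⊥ → Group.FG K → ∃ f : K →* Multiplicative ℤ, f ≠ 1) :
    LocallyIndicable G := fun K hK hfg ↦ by
  obtain ⟨f, hf⟩ := h K hK ((Group.fg_iff_subgroup_fg K).2 hfg)
  obtain ⟨g, -, hg, -⟩ := exists_surjective_zpow_eq hf
  exact ⟨g, hg⟩

lemma exists_surjective (hG : LocallyIndicable G) [Group.FG N] {i : N →* G} (hi : i ≠ 1) :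
    ∃ f : N →* Multiplicative ℤ, Function.Surjective f := by
  obtain ⟨f, hf⟩ := hG i.range (mt i.range_eq_bot_iff.1 hi)
    ((Group.fg_iff_subgroup_fg _).1 (Group.fg_range i))
  exact ⟨f.comp i.rangeRestrict, hf.comp i.rangeRestrict_surjective⟩

lemma exists_ne_one (hG : LocallyIndicable G) [Group.FG N] {i : N →* G} (hi : i ≠ 1) :
    ∃ f : N →* Multiplicative ℤ, f ≠ 1 :=
  (hG.exists_surjective hi).imp fun _ ↦ ne_one_of_surjective

lemma of_injective {i : N →* G} (hi : Function.Injective i) (hG : LocallyIndicable G) :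
    LocallyIndicable N :=
  of_exists_ne_one fun K hK _ ↦ hG.exists_ne_one (i := i.comp K.subtype) fun h ↦
    hK <| (Subgroup.eq_bot_iff_forall K).2 fun k hk ↦
      hi ((DFunLike.congr_fun h ⟨k, hk⟩).trans (map_one i).symm)

lemma subgroup (hG : LocallyIndicable G) (K : Subgroup G) : LocallyIndicable K :=
  hG.of_injective K.subtype_injective

lemma of_ker_le_range {i : N →* G} {f : G →* Q} (hi : Function.Injective i)
    (hif : f.ker ≤ i.range) (hN : LocallyIndicable N) (hQ : LocallyIndicable Q) :
    LocallyIndicable G := by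
  refine of_exists_ne_one fun K hK hfg ↦ ?_
  by_cases hf : f.comp K.subtype = 1
  · have hKi : K ≤ i.range := fun k hk ↦ hif (DFunLike.congr_fun hf (⟨k, hk⟩ : K))
    refine hN.exists_ne_one
      (i := (MonoidHom.ofInjective hi).symm.toMonoidHom.comp (Subgroup.inclusion hKi)) fun h ↦ hK ?_
    refine (Subgroup.eq_bot_iff_forall K).2 fun k hk ↦ ?_
    have h1 : Subgroup.inclusion hKi ⟨k, hk⟩ = 1 := by simpa using DFunLike.congr_fun h ⟨k, hk⟩
    exact congrArg Subtype.val h1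
  · exact hQ.exists_ne_one hf

lemma prod (hN : LocallyIndicable N) (hQ : LocallyIndicable Q) : LocallyIndicable (N × Q) := by
  refine of_ker_le_range (i := .inl N Q) (f := .snd N Q) (fun _ _ h ↦ congrArg Prod.fst h) ?_ hN hQ
  rintro ⟨n, q⟩ (rfl : q = 1)
  exact ⟨n, rfl⟩

lemma semidirectProduct {φ : Q →* MulAut N} (hN : LocallyIndicable N) (hQ : LocallyIndicable Q) :
    LocallyIndicable (N ⋊[φ] Q) :=
  of_ker_le_range SemidirectProduct.inl_injective
    SemidirectProduct.range_inl_eq_ker_rightHom.ge hN hQ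

lemma pi {ι : Type} {G : ι → Type} [∀ i, Group (G i)] (hG : ∀ i, LocallyIndicable (G i)) :
    LocallyIndicable (∀ i, G i) := by
  refine of_exists_ne_one fun K hK _ ↦ ?_
  obtain ⟨k, hk⟩ := Subgroup.ne_bot_iff_exists_ne_one.1 hK
  obtain ⟨i, hi⟩ := Function.ne_iff.1 (Subtype.coe_ne_coe.2 hk)
  exact (hG i).exists_ne_one (i := (Pi.evalMonoidHom G i).comp K.subtype) fun h ↦
    hi (DFunLike.congr_fun h k)

lemma of_isMulTorsionFree {G : Type} [CommGroup G] [IsMulTorsionFree G] : LocallyIndicable G := by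
  refine of_exists_ne_one fun K hK _ ↦ ?_
  obtain ⟨k, hk⟩ := Subgroup.ne_bot_iff_exists_ne_one.1 hK
  have : Module.Finite ℤ (Additive K) := Module.Finite.iff_addGroup_fg.2 inferInstance
  obtain ⟨φ, hφ⟩ : ∃ φ : Module.Dual ℤ (Additive K), φ (.ofMul k) ≠ 0 := by
    by_contra! h
    exact hk ((Module.forall_dual_apply_eq_zero_iff ℤ _).1 h)
  exact ⟨φ.toAddMonoidHom.toMultiplicativeRight, fun h ↦ hφ (DFunLike.congr_fun h k)⟩

lemma freeGroup (α : Type) : LocallyIndicable (FreeGroup α) := by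
  refine of_exists_ne_one fun K hK _ ↦ ?_
  let e := IsFreeGroup.toFreeGroup K
  obtain ⟨x⟩ : Nonempty (IsFreeGroup.Generators K) := by
    by_contra! h
    refine hK ((Subgroup.eq_bot_iff_forall K).2 fun k hk ↦ ?_)
    exact congrArg Subtype.val (e.injective (Subsingleton.elim (e ⟨k, hk⟩) (e 1)))
  refine ⟨(FreeGroup.lift fun _ ↦ .ofAdd 1).comp e.toMonoidHom, fun h ↦ ?_⟩
  simpa using DFunLike.congr_fun h (e.symm (FreeGroup.of x))

end LocallyIndicable

/-- The action of `C` on the free group with basis `I × C` by translation of the second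
coordinate of the letters. -/
def translationAction (I C : Type*) [Group C] : C →* MulAut (FreeGroup (I × C)) where
  toFun c := FreeGroup.freeGroupCongr ((Equiv.refl I).prodCongr (Equiv.mulLeft c))
  map_one' := by ext; simp
  map_mul' c d := by
    refine MulEquiv.toMonoidHom_injective (FreeGroup.ext_hom _ _ fun z ↦ ?_)
    simp [mul_assoc, Prod.map]

@[simp] lemma translationAction_of {I C : Type*} [Group C] (c : C) (z : I × C) :
    translationAction I C c (.of z) = .of (z.1, c * z.2) := by
  simp [translationAction, Prod.map]

namespace LocallyIndicable

/-- Conjugating the `i`-th factor of the free product by the letter `(i, 1)` makes the natural map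
to the direct product split off a free kernel. -/
lemma coprodI {I : Type} {G : I → Type} [∀ i, Group (G i)] (hG : ∀ i, LocallyIndicable (G i)) :
    LocallyIndicable (CoprodI G) := by
  classical
  let Φ : CoprodI G →* FreeGroup (I × ∀ i, G i) ⋊[translationAction I _] (∀ i, G i) :=
    CoprodI.lift fun i ↦ (MulAut.conj (SemidirectProduct.inl (.of (i, 1)))).toMonoidHom.comp
      (SemidirectProduct.inr.comp (MonoidHom.mulSingle G i))
  let retract : FreeGroup (I × ∀ i, G i) →* CoprodI G :=
    FreeGroup.lift fun z ↦ CoprodI.of (i := z.1) (z.2 z.1)⁻¹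
  have retract_left (u : CoprodI G) (c : ∀ i, G i) :
      retract (translationAction I _ c (Φ u).left) = u := by
    induction u using CoprodI.induction_on generalizing c with
    | one => simp
    | of i g => simp [Φ, retract]
    | mul u v hu hv =>
      rw [map_mul, SemidirectProduct.mul_left, map_mul, map_mul, hu, ← MulAut.mul_apply,
        ← map_mul, hv]
  refine of_injective (i := Φ) (fun u v h ↦ ?_)
    ((freeGroup _).semidirectProduct (.pi hG))
  rw [← retract_left u 1, ← retract_left v 1, h]

end LocallyIndicable

/-- The homomorphism embedding `A ∗ B` into a free product of two copies of `A × B`; it trades a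
family of two different groups for a constant one. -/
def coprodToCoprodI (A B : Type*) [Group A] [Group B] :
    Coprod A B →* CoprodI fun _ : Bool ↦ A × B :=
  Coprod.lift ((CoprodI.of (i := true)).comp (.inl A B)) ((CoprodI.of (i := false)).comp (.inr A B))

lemma coprodToCoprodI_injective (A B : Type*) [Group A] [Group B] :
    Function.Injective (coprodToCoprodI A B) := by
  let Ψ : (CoprodI fun _ : Bool ↦ A × B) →* Coprod A B := CoprodI.lift fun b ↦
    bif b then Coprod.inl.comp (.fst A B) else Coprod.inr.comp (.snd A B)
  have hΨ : Ψ.comp (coprodToCoprodI A B) = .id _ := by ext <;> simp [coprodToCoprodI, Ψ]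
  exact Function.LeftInverse.injective (DFunLike.congr_fun hΨ)

lemma LocallyIndicable.coprod {A B : Type} [Group A] [Group B] (hA : LocallyIndicable A)
    (hB : LocallyIndicable B) : LocallyIndicable (Coprod A B) :=
  of_injective (coprodToCoprodI_injective A B) (coprodI fun _ ↦ hA.prod hB)

lemma exists_amalgam {C A B : Type} [Group C] [Group A] [Group B] {f : C →* A} {g : C →* B}
    (hf : Function.Injective f) (hg : Function.Injective g) :
    ∃ (Δ : Type) (_ : Group Δ) (i : A →* Δ) (j : B →* Δ),
      Function.Injective i ∧ Function.Injective j ∧ i.comp f = j.comp g := by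
  let G : Bool → Type := fun b ↦ bif b then A else B
  let _ : ∀ b, Group (G b) := fun | true => ‹Group A› | false => ‹Group B›
  let φ : ∀ b, C →* G b := fun | true => f | false => g
  have hφ : ∀ b, Function.Injective (φ b) := fun | true => hf | false => hg
  exact ⟨PushoutI φ, inferInstance, PushoutI.of (φ := φ) true, PushoutI.of (φ := φ) false,
    PushoutI.of_injective hφ true, PushoutI.of_injective hφ false,
    (PushoutI.of_comp_eq_base (φ := φ) true).trans (PushoutI.of_comp_eq_base (φ := φ) false).symm⟩

lemma coprod_map_id_injective {C A B : Type} [Group C] [Group A] [Group B] {f : C →* A}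
    (hf : Function.Injective f) : Function.Injective (Coprod.map f (.id B)) := by
  obtain ⟨Δ, _, i, j, hi, -, hij⟩ :=
    exists_amalgam (Coprod.inl_injective : Function.Injective (Coprod.inl : C →* Coprod C B)) hf
  have h : (Coprod.lift j (i.comp Coprod.inr)).comp (Coprod.map f (.id B)) = i :=
    Coprod.hom_ext hij.symm rfl
  exact .of_comp (f := Coprod.lift j (i.comp Coprod.inr)) (by rwa [← MonoidHom.coe_comp, h])

section AltProd

variable {A B A' B' G K : Type*} [Group A] [Group B] [Group A'] [Group B'] [Group G] [Group K]

/-- The alternating product `α a₁ * β b₁ * ⋯ * α aₙ * β bₙ` of a list of pairs `(aᵢ, bᵢ)`. -/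
def altProd (α : A →* G) (β : B →* G) (L : List (A × B)) : G :=
  (L.map fun x ↦ α x.1 * β x.2).prod

variable (α : A →* G) (β : B →* G)

@[simp] lemma altProd_nil : altProd α β [] = 1 := rfl

@[simp] lemma altProd_cons (x : A × B) (L : List (A × B)) :
    altProd α β (x :: L) = α x.1 * β x.2 * altProd α β L := by
  simp [altProd]

lemma altProd_append (L L' : List (A × B)) :
    altProd α β (L ++ L') = altProd α β L * altProd α β L' := by
  simp [altProd]

lemma map_altProd (f : G →* K) (L : List (A × B)) :
    f (altProd α β L) = altProd (f.comp α) (f.comp β) L := by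
  simp [altProd, map_list_prod, Function.comp_def]

lemma altProd_map (u : A' →* A) (v : B' →* B) (L : List (A' × B')) :
    altProd α β (L.map (Prod.map u v)) = altProd (α.comp u) (β.comp v) L := by
  simp [altProd, Function.comp_def]

lemma altProd_reverse_swap_inv (L : List (A × B)) :
    altProd β α (L.map fun x ↦ (x.2⁻¹, x.1⁻¹)).reverse = (altProd α β L)⁻¹ := by
  simp [altProd, List.prod_inv_reverse, Function.comp_def, ← List.map_reverse]

end AltProd

lemma neWord_prod_ne_one {ι : Type*} {M : ι → Type*} [∀ i, Monoid (M i)] {i j : ι}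
    (w : CoprodI.NeWord M i j) : w.prod ≠ 1 := by
  classical
  intro h
  have h' : w.toWord = .empty :=
    CoprodI.Word.equiv.symm.injective (h.trans CoprodI.Word.prod_empty.symm)
  exact w.toList_ne_nil (congrArg CoprodI.Word.toList h')

lemma altProd_inl_inr_mul_inl_ne_one {A B : Type*} [Group A] [Group B] {L : List (A × B)}
    (hL : ∀ x ∈ L, x.1 ≠ 1 ∧ x.2 ≠ 1) {a : A} (ha : a ≠ 1) :
    altProd Coprod.inl Coprod.inr L * (Coprod.inl a : Coprod A B) ≠ 1 := by
  let left (a : A) (ha : a ≠ 1) : CoprodI.NeWord (fun _ : Bool ↦ A × B) true true :=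
    .singleton (a, 1) (by simpa using ha)
  let right (b : B) (hb : b ≠ 1) : CoprodI.NeWord (fun _ : Bool ↦ A × B) false false :=
    .singleton (1, b) (by simpa using hb)
  obtain ⟨w, hw⟩ : ∃ w : CoprodI.NeWord (fun _ : Bool ↦ A × B) true true,
      w.prod = coprodToCoprodI A B (altProd Coprod.inl Coprod.inr L * Coprod.inl a) := by
    induction L with
    | nil => exact ⟨left a ha, by simp [left, coprodToCoprodI]⟩
    | cons x L ih =>
      obtain ⟨⟨hx₁, hx₂⟩, hL⟩ := List.forall_mem_cons.1 hL
      obtain ⟨w, hw⟩ := ih hL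
      refine ⟨.append (.append (left x.1 hx₁) (by decide) (right x.2 hx₂)) (by decide) w, ?_⟩
      simp [hw, left, right, coprodToCoprodI, mul_assoc]
  intro h
  exact neWord_prod_ne_one w (by rw [hw, h, map_one])

section Cocycle

variable {S β G Θ : Type*} [Group S] [Group G] [Group Θ]

/-- A rule assigning to each path, given by its origin `g` and its label `u`, an element of `Θ`,
multiplicatively under concatenation of paths. -/
def IsCocycle (c : G → G → Θ) : Prop :=
  ∀ g u v, c g (u * v) = c g u * c (g * u) v

/-- Left invariance under a subgroup of a function on a group. -/
def LeftInvariant {X : Type*} (P : Subgroup G) (φ : G → X) : Prop :=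
  ∀ p ∈ P, ∀ g, φ (p * g) = φ g

lemma LeftInvariant.mono {X : Type*} {P P' : Subgroup G} {φ : G → X} (h : LeftInvariant P φ)
    (hle : P' ≤ P) : LeftInvariant P' φ := fun p hp ↦ h p (hle hp)

namespace IsCocycle

variable {c : G → G → Θ}

lemma map_one (hc : IsCocycle c) (g : G) : c g 1 = 1 := by
  simpa using hc g 1 1

lemma map_inv (hc : IsCocycle c) (g u : G) : c g u⁻¹ = (c (g * u⁻¹) u)⁻¹ := by
  have h := hc g u⁻¹ u
  rw [inv_mul_cancel, hc.map_one] at h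
  exact eq_inv_of_mul_eq_one_left h.symm

lemma map {Θ' : Type*} [Group Θ'] (hc : IsCocycle c) (f : Θ →* Θ') :
    IsCocycle fun g u ↦ f (c g u) := fun g u v ↦ by
  simp only [hc g u v, _root_.map_mul]

lemma mul {Θ : Type*} [CommGroup Θ] {c c' : G → G → Θ} (hc : IsCocycle c) (hc' : IsCocycle c') :
    IsCocycle fun g u ↦ c g u * c' g u := fun g u v ↦ by
  simp only [hc g u v, hc' g u v, mul_mul_mul_comm]

lemma of_mul_left (hc : IsCocycle c) (p : G) : IsCocycle fun g ↦ c (p * g) := fun g u v ↦ by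
  simp only [hc (p * g) u v, mul_assoc]

/-- A cocycle which is invariant under `P` restricts to a homomorphism on `P`. -/
def restrict (hc : IsCocycle c) (P : Subgroup G) (hP : LeftInvariant P c) : P →* Θ :=
  .mk' (fun p ↦ c 1 p) fun p q ↦ by
    rw [Subgroup.coe_mul, hc, one_mul, ← hP p p.2 1, mul_one]

@[simp] lemma restrict_apply (hc : IsCocycle c) (P : Subgroup G) (hP : LeftInvariant P c) (p : P) :
    hc.restrict P hP p = c 1 p := rfl

lemma conj_eq {Θ : Type*} [CommGroup Θ] {c : G → G → Θ} (hc : IsCocycle c) (P : Subgroup G)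
    (hP : LeftInvariant P c) {g u : G} (h : g * u * g⁻¹ ∈ P) : c 1 (g * u * g⁻¹) = c g u := by
  have hg : c (g * u) g⁻¹ = (c 1 g)⁻¹ := by
    rw [hc.map_inv, ← mul_one (g * u * g⁻¹), hP _ h]
  rw [hc, hc, one_mul, one_mul, hg, mul_inv_cancel_comm]

lemma ext {c c' : Coprod S (FreeGroup β) → Coprod S (FreeGroup β) → Θ} (hc : IsCocycle c)
    (hc' : IsCocycle c') (hinl : ∀ g s, c g (.inl s) = c' g (.inl s))
    (hinr : ∀ g b, c g (.inr (.of b)) = c' g (.inr (.of b))) : c = c' := by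
  have hfree (w : FreeGroup β) : ∀ g, c g (.inr w) = c' g (.inr w) := by
    induction w using FreeGroup.induction_on with
    | C1 => simp [hc.map_one, hc'.map_one]
    | of b => exact (hinr · b)
    | inv_of b _ => simp [hc.map_inv, hc'.map_inv, hinr]
    | mul v w hv hw => simp [hc _ _, hc' _ _, hv, hw]
  have h (u : Coprod S (FreeGroup β)) : ∀ g, c g u = c' g u := by
    induction u using Coprod.induction_on with
    | inl s => exact (hinl · s)
    | inr w => exact hfree w
    | mul u v hu hv => simp [hc _ _, hc' _ _, hu, hv]
  exact funext₂ fun g u ↦ h u g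

lemma leftInvariant {c : Coprod S (FreeGroup β) → Coprod S (FreeGroup β) → Θ} (hc : IsCocycle c)
    {P : Subgroup (Coprod S (FreeGroup β))} (hinl : ∀ s, LeftInvariant P fun g ↦ c g (.inl s))
    (hinr : ∀ b, LeftInvariant P fun g ↦ c g (.inr (.of b))) : LeftInvariant P c := fun p hp ↦
  congrFun ((hc.of_mul_left p).ext hc (fun g s ↦ hinl s p hp g) (fun g b ↦ hinr b p hp g))

end IsCocycle

/-- Cocycles are the first components of homomorphisms to a wreath product, so they can be
prescribed on the free factors. -/
lemma exists_isCocycle {σ : Coprod S (FreeGroup β) → S → Θ}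
    (hσ : ∀ g s s', σ g (s * s') = σ g s * σ (g * .inl s) s')
    (φ : Coprod S (FreeGroup β) → β → Θ) :
    ∃ c : Coprod S (FreeGroup β) → Coprod S (FreeGroup β) → Θ, IsCocycle c ∧
      (∀ g s, c g (.inl s) = σ g s) ∧ ∀ g b, c g (.inr (.of b)) = φ g b := by
  have arrow_apply (x g : Coprod S (FreeGroup β)) (f : Coprod S (FreeGroup β) → Θ) :
      mulAutArrow x f g⁻¹ = f (g * x)⁻¹ := congrArg f (mul_inv_rev g x).symm
  let hS : S →* (Coprod S (FreeGroup β) → Θ) ⋊[mulAutArrow] Coprod S (FreeGroup β) :=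
    .mk' (fun s ↦ ⟨fun g ↦ σ g⁻¹ s, .inl s⟩) fun s s' ↦ by
      ext g
      · obtain ⟨g, rfl⟩ := inv_surjective g
        simp [-mulAutArrow_apply_apply, -mul_inv_rev, hσ, arrow_apply]
      · simp
  let h := Coprod.lift hS (FreeGroup.lift fun b ↦ ⟨fun g ↦ φ g⁻¹ b, .inr (.of b)⟩)
  have hright : SemidirectProduct.rightHom.comp h = .id _ := by
    ext <;> simp [h, hS]
  refine ⟨fun g u ↦ (h u).left g⁻¹, fun g u v ↦ ?_, fun g s ↦ ?_, fun g b ↦ ?_⟩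
  · have hu : (h u).right = u := DFunLike.congr_fun hright u
    simp [-mulAutArrow_apply_apply, -mul_inv_rev, hu, arrow_apply]
  · simp [h, hS]
  · simp [h]

end Cocycle

lemma exists_equivariant {G Θ : Type*} [Group G] [Group Θ] {P : Subgroup G} (f : P →* Θ) :
    ∃ θ : G → Θ, θ 1 = 1 ∧ ∀ (p : P) g, θ (p * g) = f p * θ g := by
  obtain ⟨t, ht, h1⟩ := P.exists_isComplement_right 1
  refine ⟨fun g ↦ f (ht.equiv g).1, ?_, fun p g ↦ ?_⟩
  · exact (congrArg (f ·.1) (ht.equiv_one P.one_mem h1)).trans (map_one f)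
  · simp [ht.equiv_mul_left]

section Retraction

variable {S β : Type*} [Group S] (P : Subgroup (Coprod S (FreeGroup β)))

/-- The difference cocycle of an equivariant map `S → P ∩ S`, extended by `1` to the vertices
outside the coset space of `P ∩ S`. -/
lemma exists_leftInvariant_cocycle_inl :
    ∃ c : Coprod S (FreeGroup β) → Coprod S (FreeGroup β) → P.comap Coprod.inl,
      IsCocycle c ∧ LeftInvariant P c ∧ ∀ s : P.comap Coprod.inl, c 1 (.inl s) = s := by
  classical
  obtain ⟨θ, hθ1, hθ⟩ := exists_equivariant (.id (P.comap (Coprod.inl (N := FreeGroup β))))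
  let σ (g : Coprod S (FreeGroup β)) (s : S) : P.comap Coprod.inl :=
    if h : ∃ t, g * .inl t⁻¹ ∈ P then (θ h.choose)⁻¹ * θ (h.choose * s) else 1
  have σ_eq {g : Coprod S (FreeGroup β)} {t : S} (ht : g * .inl t⁻¹ ∈ P) (s : S) :
      σ g s = (θ t)⁻¹ * θ (t * s) := by
    have h : ∃ t, g * .inl t⁻¹ ∈ P := ⟨t, ht⟩
    have hd : h.choose * t⁻¹ ∈ P.comap (Coprod.inl (N := FreeGroup β)) := by
      simpa [mul_assoc] using P.mul_mem (P.inv_mem h.choose_spec) ht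
    have hθ' (s : S) : θ (h.choose * s) = ⟨_, hd⟩ * θ (t * s) := by
      simpa [mul_assoc] using hθ ⟨_, hd⟩ (t * s)
    have hθ1 := hθ' 1
    rw [mul_one, mul_one] at hθ1
    simp only [σ, dif_pos h, hθ', hθ1]
    group
  have σ_mul (g s s') : σ g (s * s') = σ g s * σ (g * .inl s) s' := by
    by_cases h : ∃ t, g * .inl t⁻¹ ∈ P
    · obtain ⟨t, ht⟩ := h
      have ht' : g * .inl s * .inl (t * s)⁻¹ ∈ P := by simpa [mul_assoc] using ht
      rw [σ_eq ht, σ_eq ht, σ_eq ht']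
      group
    · have h' : ¬ ∃ t, g * .inl s * .inl t⁻¹ ∈ P := fun ⟨t, ht⟩ ↦
        h ⟨t * s⁻¹, by simpa [mul_assoc] using ht⟩
      simp only [σ, dif_neg h, dif_neg h', mul_one]
  obtain ⟨c, hc, hinl, hinr⟩ := exists_isCocycle σ_mul fun _ _ ↦ 1
  refine ⟨c, hc, hc.leftInvariant (fun s p hp g ↦ ?_) (fun b p _ g ↦ ?_), fun s ↦ ?_⟩
  · simp only [hinl, σ, mul_assoc, P.mul_mem_cancel_left hp]
  · simp only [hinr]
  · rw [hinl, σ_eq (t := 1) (by simp), hθ1, inv_one, one_mul, one_mul,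
      ← mul_one (s : S), hθ, hθ1, mul_one, MonoidHom.id_apply]

lemma exists_retraction :
    ∃ ρ : P →* P.comap Coprod.inl, ∀ s (hs : Coprod.inl s ∈ P), ρ ⟨.inl s, hs⟩ = ⟨s, hs⟩ := by
  obtain ⟨c, hc, hP, hinl⟩ := exists_leftInvariant_cocycle_inl P
  exact ⟨hc.restrict P hP, fun s hs ↦ hinl ⟨s, hs⟩⟩

end Retraction

section PathWeight

variable {S β : Type*} [Group S]

lemma exists_isCocycle_inl_eq_one (φ : Coprod S (FreeGroup β) → β → ℚ) :
    ∃ c : Coprod S (FreeGroup β) → Coprod S (FreeGroup β) → Multiplicative ℚ, IsCocycle c ∧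
      (∀ g s, c g (.inl s) = 1) ∧ ∀ g b, c g (.inr (.of b)) = .ofAdd (φ g b) :=
  exists_isCocycle (σ := fun _ _ ↦ 1) (fun _ _ _ ↦ (mul_one 1).symm)
    fun g b ↦ Multiplicative.ofAdd (φ g b)

/-- The total weight of the path with origin `g` and label `u` in the Cayley graph of `S ∗ F`, when
the edge with origin `g` and label the letter `b` has weight `φ g b` and the edges labelled by
`S` have weight `0`. It is linear in `φ`. -/
noncomputable def pathWeight (g u : Coprod S (FreeGroup β)) :
    (Coprod S (FreeGroup β) → β → ℚ) →ₗ[ℚ] ℚ where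
  toFun φ := ((exists_isCocycle_inl_eq_one φ).choose g u).toAdd
  map_add' φ ψ := by
    obtain ⟨hφ, hφl, hφr⟩ := (exists_isCocycle_inl_eq_one φ).choose_spec
    obtain ⟨hψ, hψl, hψr⟩ := (exists_isCocycle_inl_eq_one ψ).choose_spec
    obtain ⟨h, hl, hr⟩ := (exists_isCocycle_inl_eq_one (φ + ψ)).choose_spec
    refine congrArg Multiplicative.toAdd (congrFun₂ (h.ext (hφ.mul hψ) ?_ ?_) g u)
    · simp [hl, hφl, hψl]
    · simp [hr, hφr, hψr]
  map_smul' q φ := by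
    obtain ⟨hφ, hφl, hφr⟩ := (exists_isCocycle_inl_eq_one φ).choose_spec
    obtain ⟨h, hl, hr⟩ := (exists_isCocycle_inl_eq_one (q • φ)).choose_spec
    refine congrArg Multiplicative.toAdd (congrFun₂ (h.ext
      (hφ.map (AddMonoidHom.mulLeft q).toMultiplicative) ?_ ?_) g u)
    · simp [hl, hφl]
    · simp [hr, hφr]

lemma isCocycle_pathWeight (φ : Coprod S (FreeGroup β) → β → ℚ) :
    IsCocycle fun g u ↦ Multiplicative.ofAdd (pathWeight g u φ) :=
  (exists_isCocycle_inl_eq_one φ).choose_spec.1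

lemma pathWeight_inl (g : Coprod S (FreeGroup β)) (s : S) (φ : Coprod S (FreeGroup β) → β → ℚ) :
    pathWeight g (.inl s) φ = 0 :=
  congrArg Multiplicative.toAdd ((exists_isCocycle_inl_eq_one φ).choose_spec.2.1 g s)

lemma pathWeight_inr_of (g : Coprod S (FreeGroup β)) (b : β)
    (φ : Coprod S (FreeGroup β) → β → ℚ) : pathWeight g (.inr (.of b)) φ = φ g b :=
  congrArg Multiplicative.toAdd ((exists_isCocycle_inl_eq_one φ).choose_spec.2.2 g b)

lemma eq_pathWeight {c : Coprod S (FreeGroup β) → Coprod S (FreeGroup β) → Multiplicative ℚ}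
    (hc : IsCocycle c) (hinl : ∀ g s, c g (.inl s) = 1) (g u : Coprod S (FreeGroup β)) :
    (c g u).toAdd = pathWeight g u fun g b ↦ (c g (.inr (.of b))).toAdd := by
  refine congrArg Multiplicative.toAdd (congrFun₂ (hc.ext (isCocycle_pathWeight _) ?_ ?_) g u)
  · simp [hinl, pathWeight_inl]
  · simp [pathWeight_inr_of]

lemma pathWeight_mul_left (φ : Coprod S (FreeGroup β) → β → ℚ) (p g u : Coprod S (FreeGroup β)) :
    pathWeight (p * g) u φ = pathWeight g u fun h ↦ φ (p * h) := by
  simpa [pathWeight_inr_of] using eq_pathWeight ((isCocycle_pathWeight φ).of_mul_left p)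
    (fun _ _ ↦ congrArg Multiplicative.ofAdd (pathWeight_inl ..)) g u

end PathWeight

section Independence

open Polynomial

variable {S β ι : Type*} [Group S]

/-- The prescriptions, to the pairs `(g, i)` in `T`, of the weight of the path with origin `g` and
label the relator `R i` which are attained by a `P`-invariant weight on the edges. -/
def realizable (R : ι → Coprod S (FreeGroup β)) (P : Subgroup (Coprod S (FreeGroup β)))
    (T : Finset (Coprod S (FreeGroup β) × ι)) :
    Submodule ℚ (Coprod S (FreeGroup β) → ι → ℚ) where
  carrier := {δ | ∃ φ, LeftInvariant P φ ∧ ∀ x ∈ T, pathWeight x.1 (R x.2) φ = δ x.1 x.2}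
  zero_mem' := ⟨0, fun _ _ _ ↦ rfl, fun _ _ ↦ map_zero _⟩
  add_mem' := by
    rintro δ ε ⟨φ, hφ, hδ⟩ ⟨ψ, hψ, hε⟩
    refine ⟨φ + ψ, fun p hp g ↦ ?_, fun x hx ↦ ?_⟩
    · simp only [Pi.add_apply, hφ p hp g, hψ p hp g]
    · simp only [map_add, hδ x hx, hε x hx, Pi.add_apply]
  smul_mem' := by
    rintro c δ ⟨φ, hφ, hδ⟩
    refine ⟨c • φ, fun p hp g ↦ ?_, fun x hx ↦ ?_⟩
    · simp only [Pi.smul_apply, hφ p hp g]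
    · simp only [map_smul, hδ x hx, Pi.smul_apply]

/-- The relators `R` read at the pairs in `T` are independent modulo `P`: every `P`-invariant
prescription of their weights is attained by a `P`-invariant weight on the edges. -/
def IndependentOn (R : ι → Coprod S (FreeGroup β)) (P : Subgroup (Coprod S (FreeGroup β)))
    (T : Finset (Coprod S (FreeGroup β) × ι)) : Prop :=
  ∀ d, LeftInvariant P d → d ∈ realizable R P T

variable {R : ι → Coprod S (FreeGroup β)} {P P' : Subgroup (Coprod S (FreeGroup β))}
  {T : Finset (Coprod S (FreeGroup β) × ι)}

lemma realizable_anti (hle : P' ≤ P) : realizable R P T ≤ realizable R P' T :=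
  fun _ ⟨φ, hφ, hδ⟩ ↦ ⟨φ, hφ.mono hle, hδ⟩

lemma mem_realizable_congr {δ ε : Coprod S (FreeGroup β) → ι → ℚ} (hδ : δ ∈ realizable R P T)
    (h : ∀ x ∈ T, δ x.1 x.2 = ε x.1 x.2) : ε ∈ realizable R P T := by
  obtain ⟨φ, hφ, hδ⟩ := hδ
  exact ⟨φ, hφ, fun x hx ↦ (hδ x hx).trans (h x hx)⟩

lemma independentOn_top
    (hR : ∀ d : ι → ℚ, ∃ f : FreeGroup β →* Multiplicative ℚ, ∀ i, f (R i).snd = .ofAdd (d i)) :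
    IndependentOn R ⊤ T := fun d hd ↦ by
  obtain ⟨f, hf⟩ := hR (d 1)
  refine ⟨fun _ b ↦ (f (.of b)).toAdd, fun _ _ _ ↦ rfl, fun x _ ↦ ?_⟩
  have hcocycle : IsCocycle fun _ u : Coprod S (FreeGroup β) ↦ f u.snd := fun _ u v ↦ by simp
  have h := eq_pathWeight hcocycle (by simp) x.1 (R x.2)
  simpa [hf, ← hd x.1 trivial 1] using h.symm

lemma IndependentOn.of_le (hP : IndependentOn R P T) (hle : P' ≤ P)
    (h : ∀ x ∈ T, ∀ y ∈ T, x.1 * y.1⁻¹ ∈ P → x.1 * y.1⁻¹ ∈ P') : IndependentOn R P' T := by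
  intro d hd
  let rep (g : Coprod S (FreeGroup β)) : Coprod S (FreeGroup β) :=
    Classical.epsilon fun h ↦ (∃ y ∈ T, y.1 = h) ∧ g * h⁻¹ ∈ P
  have rep_mul : LeftInvariant P rep := fun p hp g ↦ by
    simp only [rep, mul_assoc, P.mul_mem_cancel_left hp]
  refine mem_realizable_congr (realizable_anti hle (hP (fun g ↦ d (rep g)) fun p hp g ↦ ?_))
    fun x hx ↦ ?_
  · exact congrArg d (rep_mul p hp g)
  · obtain ⟨⟨y, hy, hyx⟩, hxy⟩ : (∃ y ∈ T, y.1 = rep x.1) ∧ x.1 * (rep x.1)⁻¹ ∈ P :=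
      Classical.epsilon_spec (p := fun h ↦ (∃ y ∈ T, y.1 = h) ∧ x.1 * h⁻¹ ∈ P)
        ⟨x.1, ⟨x, hx, rfl⟩, by simp⟩
    rw [← hyx] at hxy ⊢
    simpa using congrFun (hd _ (h x hx y hy hxy) y.1).symm x.2

lemma eval_add_eq_sum_hasseDeriv (q : ℚ[X]) (x y : ℚ) :
    q.eval (x + y) = ∑ k ∈ Finset.range (q.natDegree + 1), (hasseDeriv k q).eval x * y ^ k := by
  rw [add_comm, ← taylor_eval, eval_eq_sum_range, natDegree_taylor]
  simp only [taylor_coeff]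

lemma pathWeight_eval_mul (q : ℚ[X]) (θ : Coprod S (FreeGroup β) → ℚ)
    (φ : Coprod S (FreeGroup β) → β → ℚ) (g u : Coprod S (FreeGroup β)) :
    pathWeight g u (fun h b ↦ q.eval (θ h) * φ h b) = q.eval (θ g) * pathWeight g u φ +
      ∑ k ∈ Finset.range q.natDegree, (hasseDeriv (k + 1) q).eval (θ g) *
        pathWeight 1 u fun h b ↦ (θ (g * h) - θ g) ^ (k + 1) * φ (g * h) b := by
  have hsum : (fun h b ↦ q.eval (θ (g * h)) * φ (g * h) b) =
      ∑ k ∈ Finset.range (q.natDegree + 1), (hasseDeriv k q).eval (θ g) •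
        fun h b ↦ (θ (g * h) - θ g) ^ k * φ (g * h) b := by
    ext h b
    rw [← add_sub_cancel (θ g) (θ (g * h)), eval_add_eq_sum_hasseDeriv, Finset.sum_mul]
    simp [mul_assoc]
  rw [← mul_one g, pathWeight_mul_left, pathWeight_mul_left, hsum, map_sum, Finset.sum_range_succ']
  simp [add_comm]

lemma IndependentOn.eval_mul_mem_realizable (hP : IndependentOn R P T) (hle : P' ≤ P)
    {θ : Coprod S (FreeGroup β) → ℚ} (hθ : ∀ p ∈ P, ∀ g h, θ (p * g) - θ (p * h) = θ g - θ h)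
    (hθ' : LeftInvariant P' θ) (q : ℚ[X]) {d : Coprod S (FreeGroup β) → ι → ℚ}
    (hd : LeftInvariant P d) : (fun g i ↦ q.eval (θ g) * d g i) ∈ realizable R P' T := by
  induction hn : q.natDegree using Nat.strong_induction_on generalizing q d with
  | _ n ih =>
  obtain ⟨φ, hφ, hφd⟩ := hP d hd
  let e (k : ℕ) (g : Coprod S (FreeGroup β)) (i : ι) : ℚ :=
    pathWeight 1 (R i) fun h b ↦ (θ (g * h) - θ g) ^ (k + 1) * φ (g * h) b
  have he (k : ℕ) : LeftInvariant P (e k) := fun p hp g ↦ by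
    simp only [e, mul_assoc, hθ p hp, hφ p hp]
  have hφ' : (fun g i ↦ pathWeight g (R i) fun h b ↦ q.eval (θ h) * φ h b) ∈ realizable R P' T :=
    ⟨_, fun p hp g ↦ by simp only [hθ' p hp, hφ p (hle hp)], fun _ _ ↦ rfl⟩
  have hsum : ∀ k ∈ Finset.range q.natDegree,
      (fun g i ↦ (hasseDeriv (k + 1) q).eval (θ g) * e k g i) ∈ realizable R P' T := fun k hk ↦ by
    refine ih _ ?_ (hasseDeriv (k + 1) q) (he k) rfl
    have h := natDegree_hasseDeriv_le q (k + 1)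
    have := Finset.mem_range.1 hk
    omega
  refine mem_realizable_congr (Submodule.sub_mem _ hφ' (Submodule.sum_mem _ hsum)) fun x hx ↦ ?_
  simp only [Pi.sub_apply, Finset.sum_apply, e]
  rw [pathWeight_eval_mul, hφd x hx, add_sub_cancel_right]

/-- A prescription which is only invariant under the kernel is invariant under `P` on each level
of `f`; Lagrange interpolation combines these with polynomial coefficients. -/
lemma IndependentOn.ker (hP : IndependentOn R P T) {f : P →* Multiplicative ℤ}
    (hf : Function.Surjective f) : IndependentOn R (f.ker.map P.subtype) T := by
  intro d hd
  obtain ⟨t, ht⟩ := hf (.ofAdd 1)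
  obtain ⟨θ, -, hθ⟩ := exists_equivariant f
  let level (n : ℤ) (g : Coprod S (FreeGroup β)) : ι → ℚ := d ((t ^ (n - (θ g).toAdd) : P) * g)
  have level_inv (n : ℤ) : LeftInvariant P (level n) := fun p hp g ↦ by
    let m := n - (θ g).toAdd
    have hker : t ^ (m - (f ⟨p, hp⟩).toAdd) * ⟨p, hp⟩ * (t ^ m)⁻¹ ∈ f.ker := by
      refine Multiplicative.toAdd.injective ?_
      simp [ht]
    have h := hd _ ⟨_, hker, rfl⟩ ((t ^ m : P) * g)
    have hn : n - (θ (p * g)).toAdd = m - (f ⟨p, hp⟩).toAdd := by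
      rw [hθ ⟨p, hp⟩, toAdd_mul, sub_add_eq_sub_sub_swap]
    simpa only [level, hn, P.subtype_apply, Subgroup.coe_mul, Subgroup.coe_inv, mul_assoc,
      inv_mul_cancel_left] using h
  let nodes : Finset ℤ := T.image fun x ↦ (θ x.1).toAdd
  have hmem : ∀ n ∈ nodes, (fun g i ↦ (Lagrange.basis nodes ((↑) : ℤ → ℚ) n).eval
      ((θ g).toAdd : ℚ) * level n g i) ∈ realizable R (f.ker.map P.subtype) T := fun n _ ↦ by
    refine hP.eval_mul_mem_realizable (Subgroup.map_subtype_le _) (fun p hp g h ↦ ?_) ?_ _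
      (level_inv n)
    · simp [hθ ⟨p, hp⟩]
    · rintro _ ⟨p, hp : f p = 1, rfl⟩ g
      simp [hθ, hp]
  refine mem_realizable_congr (Submodule.sum_mem _ hmem) fun x hx ↦ ?_
  have hx' : (θ x.1).toAdd ∈ nodes := Finset.mem_image_of_mem _ hx
  simp only [Finset.sum_apply]
  rw [Finset.sum_eq_single_of_mem _ hx' fun n _ hne ↦ ?_,
    Lagrange.eval_basis_self Int.cast_injective.injOn hx']
  · simp [level]
  · rw [Lagrange.eval_basis_of_ne hne hx', zero_mul]

end Independence

section Howie

variable {S β ι : Type} [Group S] {R : ι → Coprod S (FreeGroup β)}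
  {P : Subgroup (Coprod S (FreeGroup β))} {T : Finset (Coprod S (FreeGroup β) × ι)}

/-- The conjugate of the relator `R x.2` by `x.1`. -/
def conjRelator {G ι : Type*} [Group G] (R : ι → G) (x : G × ι) : G :=
  x.1 * R x.2 * x.1⁻¹

lemma leftInvariant_ite_conj {G ι : Type*} [Group G] (P : Subgroup G) [DecidablePred (· ∈ P)]
    (ω : P →* Multiplicative ℤ) (R : ι → G) :
    LeftInvariant P fun g i ↦
      if h : conjRelator R (g, i) ∈ P then ((ω ⟨_, h⟩).toAdd : ℚ) else 0 := fun p hp g ↦ by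
  funext i
  have hconj : conjRelator R (p * g, i) = p * conjRelator R (g, i) * p⁻¹ := by
    simp only [conjRelator, mul_inv_rev, mul_assoc]
  have hiff : conjRelator R (p * g, i) ∈ P ↔ conjRelator R (g, i) ∈ P := by
    rw [hconj, P.mul_mem_cancel_right (P.inv_mem hp), P.mul_mem_cancel_left hp]
  by_cases h : conjRelator R (g, i) ∈ P
  · have hω : (⟨_, hiff.2 h⟩ : P) = ⟨p, hp⟩ * ⟨_, h⟩ * ⟨p, hp⟩⁻¹ := Subtype.ext hconj
    simp only [dif_pos h, dif_pos (hiff.2 h)]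
    rw [hω, map_mul ω, map_mul ω, map_inv ω, mul_inv_cancel_comm]
  · simp only [dif_neg h, dif_neg (mt hiff.1 h)]

lemma LocallyIndicable.exists_retraction_comp (hS : LocallyIndicable S) [Group.FG P] {a : S}
    (ha : a ≠ 1) (haP : .inl a ∈ P) : ∃ ω : P →* Multiplicative ℤ,
      ∃ s, ∃ hs : .inl s ∈ P, ω ⟨.inl s, hs⟩ = .ofAdd 1 := by
  obtain ⟨ρ, hρ⟩ := exists_retraction P
  have : Group.FG (P.comap (Coprod.inl (M := S))) :=
    Group.fg_of_surjective (f := ρ) fun s ↦ ⟨⟨.inl s, s.2⟩, hρ s s.2⟩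
  obtain ⟨χ, hχ⟩ := hS.exists_surjective (i := (P.comap Coprod.inl).subtype)
    fun h ↦ ha (DFunLike.congr_fun h (⟨a, haP⟩ : P.comap Coprod.inl))
  obtain ⟨s, hs⟩ := hχ (.ofAdd 1)
  exact ⟨χ.comp ρ, s, s.2, (congrArg χ (hρ s s.2)).trans hs⟩

/-- A weight on the edges is chosen so as to cancel the value of a homomorphism coming from `S` on
the relators. -/
lemma IndependentOn.exists_hom (hP : IndependentOn R P T) (hS : LocallyIndicable S) [Group.FG P]
    {a : S} (ha : a ≠ 1) (haP : .inl a ∈ P) : ∃ f : P →* Multiplicative ℤ, Function.Surjective f ∧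
      ∀ x ∈ T, ∀ h : conjRelator R x ∈ P, f ⟨_, h⟩ = 1 := by
  classical
  obtain ⟨ω, s, hs, hωs⟩ := hS.exists_retraction_comp ha haP
  obtain ⟨φ, hφ, hφR⟩ := (realizable R P T).neg_mem (hP _ (leftInvariant_ite_conj P ω R))
  have hweight : LeftInvariant P fun g u ↦ Multiplicative.ofAdd (pathWeight g u φ) :=
    fun p hp g ↦ funext fun u ↦ by simp only [pathWeight_mul_left, hφ p hp]
  let F : P →* Multiplicative ℚ := (Int.castAddHom ℚ).toMultiplicative.comp ω *
    (isCocycle_pathWeight φ).restrict P hweight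
  have hF : F.range.subtype ≠ 1 := fun h ↦ by
    have h1 : F ⟨.inl s, hs⟩ = 1 := DFunLike.congr_fun h ⟨_, _, rfl⟩
    have h2 : (1 : ℚ) = 0 := by
      simpa [F, hωs, pathWeight_inl, ← ofAdd_add] using congrArg Multiplicative.toAdd h1
    exact one_ne_zero h2
  have : Group.FG F.range := Group.fg_range F
  obtain ⟨f, hf⟩ := LocallyIndicable.of_isMulTorsionFree.exists_surjective hF
  refine ⟨f.comp F.rangeRestrict, hf.comp F.rangeRestrict_surjective, fun x hx h ↦ ?_⟩
  have hFx : F.rangeRestrict ⟨_, h⟩ = 1 := Subtype.ext <| by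
    have hconj : pathWeight 1 (conjRelator R x) φ = pathWeight x.1 (R x.2) φ :=
      Multiplicative.ofAdd.injective ((isCocycle_pathWeight φ).conj_eq P hweight h)
    have hx' : pathWeight x.1 (R x.2) φ = -((ω ⟨_, h⟩).toAdd : ℚ) :=
      (hφR x hx).trans (congrArg Neg.neg (dif_pos h))
    simp [F, hconj, hx']
  rw [MonoidHom.comp_apply, hFx, map_one]

open Classical in
/-- The pairs of elements of `T` in the same coset of `P`. -/
noncomputable def relatedPairs (P : Subgroup (Coprod S (FreeGroup β)))
    (T : Finset (Coprod S (FreeGroup β) × ι)) :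
    Finset ((Coprod S (FreeGroup β) × ι) × (Coprod S (FreeGroup β) × ι)) :=
  {z ∈ T ×ˢ T | z.1.1 * z.2.1⁻¹ ∈ P}

lemma mem_relatedPairs {z : (Coprod S (FreeGroup β) × ι) × (Coprod S (FreeGroup β) × ι)} :
    z ∈ relatedPairs P T ↔ (z.1 ∈ T ∧ z.2 ∈ T) ∧ z.1.1 * z.2.1⁻¹ ∈ P := by
  simp [relatedPairs]

lemma IndependentOn.exists_lt (hP : IndependentOn R P T) (hS : LocallyIndicable S)
    (hTP : ∀ x ∈ T, conjRelator R x ∈ P) {a : S} (ha : a ≠ 1)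
    (haT : .inl a ∈ Subgroup.closure (conjRelator R '' T)) :
    ∃ P', IndependentOn R P' T ∧ (∀ x ∈ T, conjRelator R x ∈ P') ∧
      relatedPairs P' T ⊂ relatedPairs P T := by
  let s := conjRelator R '' T
  let t := (fun z ↦ z.1.1 * z.2.1⁻¹) '' {z | z ∈ relatedPairs P T}
  let P₁ := Subgroup.closure (s ∪ t)
  have hle : P₁ ≤ P := by
    refine (Subgroup.closure_le P).2 (Set.union_subset ?_ ?_)
    · exact Set.image_subset_iff.2 hTP
    · exact Set.image_subset_iff.2 fun z hz ↦ (mem_relatedPairs.1 hz).2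
  have hsP₁ (x) (hx : x ∈ T) : conjRelator R x ∈ P₁ :=
    Subgroup.subset_closure (.inl ⟨x, hx, rfl⟩)
  have htP₁ (z) (hz : z ∈ relatedPairs P T) : z.1.1 * z.2.1⁻¹ ∈ P₁ :=
    Subgroup.subset_closure (.inr ⟨z, hz, rfl⟩)
  have hP₁ : IndependentOn R P₁ T := hP.of_le hle fun x hx y hy hxy ↦
    htP₁ (x, y) (mem_relatedPairs.2 ⟨⟨hx, hy⟩, hxy⟩)
  have : Finite (s ∪ t : Set _) := ((T.finite_toSet.image _).union
    ((relatedPairs P T).finite_toSet.image _)).to_subtype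
  obtain ⟨f, hf, hfT⟩ := hP₁.exists_hom hS ha
    (Subgroup.closure_mono Set.subset_union_left haT)
  refine ⟨f.ker.map P₁.subtype, hP₁.ker hf, fun x hx ↦ ⟨⟨_, hsP₁ x hx⟩, hfT x hx _, rfl⟩,
    Finset.ssubset_iff_subset_ne.2 ⟨?_, fun heq ↦ ne_one_of_surjective hf ?_⟩⟩
  · exact fun z hz ↦ mem_relatedPairs.2
      ((mem_relatedPairs.1 hz).imp_right fun h ↦ hle (Subgroup.map_subtype_le _ h))
  · have hker : P₁ ≤ f.ker.map P₁.subtype := by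
      refine (Subgroup.closure_le _).2 (Set.union_subset ?_ ?_)
      · exact Set.image_subset_iff.2 fun x hx ↦ ⟨⟨_, hsP₁ x hx⟩, hfT x hx _, rfl⟩
      · exact Set.image_subset_iff.2 fun z hz ↦ (mem_relatedPairs.1 (heq ▸ hz)).2
    ext p
    obtain ⟨q, hq, hqp⟩ := hker p.2
    rw [← Subtype.ext hqp]
    exact congrArg Multiplicative.toAdd hq

lemma IndependentOn.eq_one_of_inl_mem (hP : IndependentOn R P T) (hS : LocallyIndicable S)
    (hTP : ∀ x ∈ T, conjRelator R x ∈ P) {a : S}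
    (haT : .inl a ∈ Subgroup.closure (conjRelator R '' T)) : a = 1 := by
  by_contra ha
  induction hn : relatedPairs P T using Finset.strongInduction generalizing P with
  | _ n ih =>
    obtain ⟨P', hP', hTP', hlt⟩ := hP.exists_lt hS hTP ha haT
    exact ih _ (hn ▸ hlt) hP' hTP' rfl

end Howie

lemma exists_finset_subset_mem_closure {G : Type*} [Group G] {s : Set G} {x : G}
    (hx : x ∈ Subgroup.closure s) :
    ∃ t : Finset G, (t : Set G) ⊆ s ∧ x ∈ Subgroup.closure (t : Set G) := by
  classical
  induction hx using Subgroup.closure_induction with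
  | mem x hx => exact ⟨{x}, by simpa using hx, Subgroup.subset_closure (by simp)⟩
  | one => exact ⟨∅, by simp, Subgroup.one_mem _⟩
  | inv x _ hx => exact hx.imp fun t ht ↦ ⟨ht.1, Subgroup.inv_mem _ ht.2⟩
  | mul x y _ _ hx hy =>
    obtain ⟨t, hts, hx⟩ := hx
    obtain ⟨u, hus, hy⟩ := hy
    refine ⟨t ∪ u, by simpa using ⟨hts, hus⟩, ?_⟩
    rw [Finset.coe_union]
    exact Subgroup.mul_mem _ (Subgroup.closure_mono Set.subset_union_left hx)
      (Subgroup.closure_mono Set.subset_union_right hy)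

/-- Howie's theorem on systems of equations over locally indicable groups, for systems whose
exponent-sum matrix has linearly independent rows. -/
theorem LocallyIndicable.eq_one_of_inl_mem_normalClosure {S β ι : Type} [Group S]
    (hS : LocallyIndicable S) {R : ι → Coprod S (FreeGroup β)}
    (hR : ∀ d : ι → ℚ, ∃ f : FreeGroup β →* Multiplicative ℚ, ∀ i, f (R i).snd = .ofAdd (d i))
    {a : S} (ha : .inl a ∈ Subgroup.normalClosure (Set.range R)) : a = 1 := by
  classical
  obtain ⟨t, ht, hat⟩ := exists_finset_subset_mem_closure ha
  have hconj : Group.conjugatesOfSet (Set.range R) =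
      conjRelator R '' Set.univ := by
    ext
    simp [conjRelator, Group.mem_conjugatesOfSet_iff, isConj_iff, @exists_comm _ ι]
  obtain ⟨T, -, rfl⟩ := Finset.subset_set_image_iff.1 (ht.trans_eq hconj)
  exact IndependentOn.eq_one_of_inl_mem (independentOn_top hR) hS (fun _ _ ↦ trivial)
    (by simpa using hat)

lemma LocallyIndicable.exists_solution {S β ι : Type} [Group S]
    (hS : LocallyIndicable S) {R : ι → Coprod S (FreeGroup β)}
    (hR : ∀ d : ι → ℚ, ∃ f : FreeGroup β →* Multiplicative ℚ, ∀ i, f (R i).snd = .ofAdd (d i)) :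
    ∃ (Γ : Type) (_ : Group Γ) (s : S →* Γ) (f : FreeGroup β →* Γ),
      Function.Injective s ∧ ∀ i, Coprod.lift s f (R i) = 1 := by
  let q := QuotientGroup.mk' (Subgroup.normalClosure (Set.range R))
  refine ⟨_, inferInstance, q.comp Coprod.inl, q.comp Coprod.inr, ?_, fun i ↦ ?_⟩
  · exact (injective_iff_map_eq_one _).2 fun a ha ↦
      hS.eq_one_of_inl_mem_normalClosure hR ((QuotientGroup.eq_one_iff _).1 ha)
  · rw [← Coprod.comp_lift, Coprod.lift_inl_inr, MonoidHom.comp_id]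
    exact (QuotientGroup.eq_one_iff _).2 (Subgroup.subset_normalClosure ⟨i, rfl⟩)

/-- The free product of `K` with copies of `B` indexed by the levels in `X`. For `X = ℤ` and `K`
the kernel of an epimorphism `A →* ℤ`, this is the kernel of the induced map `A ∗ B →* ℤ`. -/
abbrev LevelGroup (K X B : Type) [Group K] [Group B] := Coprod K (CoprodI fun _ : X ↦ B)

namespace LevelGroup

variable {K K' X Y B G : Type} [Group K] [Group K'] [Group B] [Group G]

/-- The inclusion of the copy of `B` at level `x`. -/
def level (x : X) : B →* LevelGroup K X B :=
  Coprod.inr.comp (CoprodI.of (M := fun _ : X ↦ B) (i := x))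

lemma hom_ext {φ ψ : LevelGroup K X B →* G} (hK : φ.comp Coprod.inl = ψ.comp Coprod.inl)
    (hB : ∀ x, φ.comp (level x) = ψ.comp (level x)) : φ = ψ :=
  Coprod.hom_ext hK (CoprodI.ext_hom _ _ hB)

/-- The homomorphism out of a level group with prescribed restrictions to `K` and to the levels. -/
def lift (κ : K →* G) (β : X → B →* G) : LevelGroup K X B →* G :=
  Coprod.lift κ (CoprodI.lift β)

@[simp] lemma lift_inl (κ : K →* G) (β : X → B →* G) (k : K) :
    lift κ β (Coprod.inl k) = κ k :=
  Coprod.lift_apply_inl ..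

@[simp] lemma lift_level (κ : K →* G) (β : X → B →* G) (x : X) (b : B) :
    lift κ β (level x b) = β x b := by
  simp [lift, level]

/-- The functoriality of level groups in `K` and in the set of levels. -/
def map (κ : K →* K') (u : X → Y) : LevelGroup K X B →* LevelGroup K' Y B :=
  lift (Coprod.inl.comp κ) fun x ↦ level (u x)

@[simp] lemma map_inl (κ : K →* K') (u : X → Y) (k : K) :
    map (B := B) κ u (Coprod.inl k) = Coprod.inl (κ k) :=
  lift_inl ..

@[simp] lemma map_level (κ : K →* K') (u : X → Y) (x : X) (b : B) :
    map κ u (level x b) = level (u x) b :=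
  lift_level ..

lemma map_injective {κ : K →* K'} {u : X → Y} (hκ : Function.Injective κ)
    (hu : Function.Injective u) : Function.Injective (map (B := B) κ u) := by
  classical
  let ρ : LevelGroup K' Y B →* Coprod K' (CoprodI fun _ : X ↦ B) :=
    lift Coprod.inl fun y ↦ if h : ∃ x, u x = y then level h.choose else 1
  have h : ρ.comp (map κ u) = Coprod.map κ (.id _) := by
    refine hom_ext (MonoidHom.ext fun k ↦ by simp [ρ]) fun x ↦ MonoidHom.ext fun b ↦ ?_
    have hx : ∃ x', u x' = u x := ⟨x, rfl⟩
    simp only [ρ, MonoidHom.comp_apply, map_level, lift_level, dif_pos hx, hu hx.choose_spec]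
    rfl
  exact .of_comp (f := ρ) (by rw [← MonoidHom.coe_comp, h]; exact coprod_map_id_injective hκ)

lemma lift_inl_level_injective (x : X) :
    Function.Injective (Coprod.lift Coprod.inl (level x) : Coprod K B →* LevelGroup K X B) := by
  let ρ : LevelGroup K X B →* Coprod K B := lift Coprod.inl fun _ ↦ Coprod.inr
  have h : ρ.comp (Coprod.lift Coprod.inl (level x)) = .id _ :=
    Coprod.hom_ext (MonoidHom.ext fun k ↦ by simp [ρ]) (MonoidHom.ext fun b ↦ by simp [ρ])
  exact Function.LeftInverse.injective (g := ρ) (DFunLike.congr_fun h)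

end LevelGroup

section Rewriting

variable {A B : Type} [Group A] (f : A →* Multiplicative ℤ)

/-- The sum of the heights under `f` of the `A`-entries of a list of pairs. -/
def heightSum (L : List (A × B)) : ℤ := (f (L.map Prod.fst).prod).toAdd

@[simp] lemma heightSum_nil : heightSum f ([] : List (A × B)) = 0 := by simp [heightSum]

@[simp] lemma heightSum_cons (x : A × B) (L : List (A × B)) :
    heightSum f (x :: L) = (f x.1).toAdd + heightSum f L := by
  simp [heightSum]

@[simp] lemma heightSum_append (L L' : List (A × B)) :
    heightSum f (L ++ L') = heightSum f L + heightSum f L' := by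
  simp [heightSum]

/-- The heights at which the `B`-letters of the word `a₁ b₁ ⋯ aₙ bₙ` are read when the word is
started at height `e`. -/
def levels (e : ℤ) : List (A × B) → List ℤ
  | [] => []
  | x :: L => (e + (f x.1).toAdd) :: levels (e + (f x.1).toAdd) L

@[simp] lemma levels_nil (e : ℤ) : levels f e ([] : List (A × B)) = [] := rfl

@[simp] lemma levels_cons (e : ℤ) (x : A × B) (L : List (A × B)) :
    levels f e (x :: L) = (e + (f x.1).toAdd) :: levels f (e + (f x.1).toAdd) L := rfl

@[simp] lemma length_levels (e : ℤ) (L : List (A × B)) : (levels f e L).length = L.length := by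
  induction L generalizing e with
  | nil => rfl
  | cons x L ih => simp [ih]

lemma levels_append (e : ℤ) (L L' : List (A × B)) :
    levels f e (L ++ L') = levels f e L ++ levels f (e + heightSum f L) L' := by
  induction L generalizing e with
  | nil => simp
  | cons x L ih => simp [ih, add_assoc]

lemma levels_add (d e : ℤ) (L : List (A × B)) :
    levels f (d + e) L = (levels f e L).map (d + ·) := by
  induction L generalizing e with
  | nil => rfl
  | cons x L ih => simp [← ih, add_assoc]

variable {f}

lemma exists_eq_append_cons_of_mem_levels {e l : ℤ} {L : List (A × B)} (hl : l ∈ levels f e L) :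
    ∃ P x R, L = P ++ x :: R ∧ l ∉ levels f e P ∧ e + heightSum f P + (f x.1).toAdd = l := by
  induction L generalizing e with
  | nil => simp at hl
  | cons x L ih =>
    by_cases hx : e + (f x.1).toAdd = l
    · exact ⟨[], x, L, rfl, by simp, by simpa using hx⟩
    · obtain ⟨P, y, R, rfl, hP, hy⟩ := ih ((List.mem_cons.1 hl).resolve_left (Ne.symm hx))
      exact ⟨x :: P, y, R, rfl, by simpa [Ne.symm hx] using hP, by simpa [← add_assoc] using hy⟩

lemma add_heightSum_mem_levels {L : List (A × B)} (hL : L ≠ []) (e : ℤ) :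
    e + heightSum f L ∈ levels f e L := by
  obtain ⟨L, x, rfl⟩ := L.eq_nil_or_concat.resolve_left hL
  simp [levels_append, add_assoc]

lemma map_eq_one_of_levels_eq {l : ℤ} {L : List (A × B)} (h : ∀ n ∈ levels f l L, n = l) :
    ∀ x ∈ L, f x.1 = 1 := by
  induction L with
  | nil => simp
  | cons x L ih =>
    obtain ⟨hx, hL⟩ := List.forall_mem_cons.1 h
    rw [hx] at hL
    exact List.forall_mem_cons.2 ⟨by simpa using hx, ih hL⟩

lemma exists_mem_levels_ne {L : List (A × B)} (hsum : heightSum f L = 0)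
    (hf : ∃ x ∈ L, f x.1 ≠ 1) (e l : ℤ) : ∃ n ∈ levels f e L, n ≠ l := by
  by_contra! h
  obtain ⟨x, hx, hfx⟩ := hf
  have hl := h _ (add_heightSum_mem_levels (List.ne_nil_of_mem hx) e)
  rw [hsum, add_zero] at hl
  subst hl
  exact hfx (map_eq_one_of_levels_eq h x hx)

lemma exists_levels_mem_Icc {L : List (A × B)} (hsum : heightSum f L = 0)
    (hf : ∃ x ∈ L, f x.1 ≠ 1) :
    ∃ e m : ℤ, 0 < m ∧ 0 ∈ levels f e L ∧ m ∈ levels f e L ∧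
      ∀ n ∈ levels f e L, n ∈ Set.Icc 0 m := by
  have hne : (levels f 0 L).toFinset.Nonempty :=
    (exists_mem_levels_ne hsum hf 0 0).imp fun n hn ↦ List.mem_toFinset.2 hn.1
  obtain ⟨a, ha, hmin⟩ := Finset.exists_min_image _ id hne
  obtain ⟨b, hb, hmax⟩ := Finset.exists_max_image _ id hne
  simp only [List.mem_toFinset, id] at ha hb hmin hmax
  obtain ⟨n, hn, hna⟩ := exists_mem_levels_ne hsum hf 0 a
  have hlevels : levels f (-a) L = (levels f 0 L).map (-a + ·) := by rw [← levels_add, add_zero]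
  have := hmin n hn
  have := hmax n hn
  refine ⟨-a, b - a, by omega, ?_, ?_, ?_⟩
  · exact hlevels ▸ List.mem_map.2 ⟨a, ha, by omega⟩
  · exact hlevels ▸ List.mem_map.2 ⟨b, hb, by omega⟩
  · rw [hlevels, List.forall_mem_map]
    exact fun n hn ↦ ⟨by have := hmin n hn; omega, by have := hmax n hn; omega⟩

variable [Group B] {t : A} (ht : f t = .ofAdd 1)

/-- The element `t ^ e * a * t ^ (-(e + f a))` of `f.ker`, left over from the letter `a` read at
height `e`. -/
def kerPart (e : ℤ) (a : A) : f.ker :=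
  ⟨t ^ e * a * t ^ (-(e + (f a).toAdd)), by
    rw [MonoidHom.mem_ker, map_mul, map_mul, map_zpow, map_zpow, ht]
    exact Multiplicative.toAdd.injective (by simp)⟩

@[simp] lemma coe_kerPart (e : ℤ) (a : A) :
    (kerPart ht e a : A) = t ^ e * a * t ^ (-(e + (f a).toAdd)) := rfl

/-- The Reidemeister–Schreier rewriting of the word `a₁ b₁ ⋯ aₙ bₙ`, started at height `e`, with
respect to the transversal of powers of `t`. -/
def levelWord (e : ℤ) : List (A × B) → LevelGroup f.ker ℤ B
  | [] => 1
  | x :: L => Coprod.inl (kerPart ht e x.1) * LevelGroup.level (e + (f x.1).toAdd) x.2 *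
      levelWord (e + (f x.1).toAdd) L

lemma levelWord_append (e : ℤ) (L L' : List (A × B)) :
    levelWord ht e (L ++ L') = levelWord ht e L * levelWord ht (e + heightSum f L) L' := by
  induction L generalizing e with
  | nil => simp [levelWord]
  | cons x L ih => simp [levelWord, ih, mul_assoc, add_assoc]

lemma levelWord_mem {S : Subgroup (LevelGroup f.ker ℤ B)} {e : ℤ} {L : List (A × B)}
    (hK : ∀ k, Coprod.inl k ∈ S) (hB : ∀ n ∈ levels f e L, ∀ b, LevelGroup.level n b ∈ S) :
    levelWord ht e L ∈ S := by
  induction L generalizing e with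
  | nil => exact S.one_mem
  | cons x L ih =>
    obtain ⟨hx, hL⟩ := List.forall_mem_cons.1 hB
    exact S.mul_mem (S.mul_mem (hK _) (hx _)) (ih hL)

/-- The map `LevelGroup f.ker ℤ B →* A ∗ B` sending level `n` to the conjugate of `B` by `t ^ n`. -/
def LevelGroup.toCoprod (f : A →* Multiplicative ℤ) (t : A) : LevelGroup f.ker ℤ B →* Coprod A B :=
  LevelGroup.lift (Coprod.inl.comp f.ker.subtype) fun n : ℤ ↦
    (MulAut.conj (Coprod.inl (t ^ n) : Coprod A B)).toMonoidHom.comp Coprod.inr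

@[simp] lemma LevelGroup.toCoprod_inl (k : f.ker) :
    LevelGroup.toCoprod f t (Coprod.inl k : LevelGroup f.ker ℤ B) = Coprod.inl k.1 :=
  LevelGroup.lift_inl ..

@[simp] lemma LevelGroup.toCoprod_level (n : ℤ) (b : B) :
    LevelGroup.toCoprod f t (LevelGroup.level n b) =
      Coprod.inl (t ^ n) * Coprod.inr b * (Coprod.inl (t ^ n))⁻¹ :=
  LevelGroup.lift_level ..

lemma LevelGroup.toCoprod_levelWord (e : ℤ) (L : List (A × B)) :
    LevelGroup.toCoprod f t (levelWord ht e L) = Coprod.inl (t ^ e) *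
      altProd Coprod.inl Coprod.inr L * (Coprod.inl (t ^ (e + heightSum f L)))⁻¹ := by
  induction L generalizing e with
  | nil => simp [levelWord]
  | cons x L ih =>
    rw [levelWord, map_mul, map_mul, ih, toCoprod_inl, toCoprod_level, coe_kerPart, map_mul,
      map_mul, zpow_neg, map_inv, altProd_cons, heightSum_cons, ← add_assoc]
    simp only [mul_assoc, inv_mul_cancel_left]

/-- The natural map to the full level group from the one in which level `l` is missing. -/
def LevelGroup.avoiding (f : A →* Multiplicative ℤ) (B : Type) [Group B] (l : ℤ) :
    LevelGroup f.ker {n : ℤ // n ≠ l} B →* LevelGroup f.ker ℤ B :=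
  LevelGroup.map (.id _) Subtype.val

lemma levelWord_mul_inl_kerPart_ne_one {P : List (A × B)} (hP : ∀ x ∈ P, x.1 ≠ 1 ∧ x.2 ≠ 1) {a : A}
    (ha : a ≠ 1) {l : ℤ} (hl : l + heightSum f P + (f a).toAdd = l) :
    levelWord ht l P * Coprod.inl (kerPart ht (l + heightSum f P) a) ≠ 1 := by
  intro h
  refine altProd_inl_inr_mul_inl_ne_one hP ha (conj_eq_one_iff (a := Coprod.inl (t ^ l)).1 ?_)
  rw [← map_one (LevelGroup.toCoprod f t), ← h, map_mul, LevelGroup.toCoprod_levelWord,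
    LevelGroup.toCoprod_inl, coe_kerPart, hl, map_mul, map_mul, zpow_neg, map_inv]
  simp only [mul_assoc, inv_mul_cancel_left]

/-- The word is cut at its visits to level `l`. -/
lemma exists_levelWord_eq_altProd (l : ℤ) {L : List (A × B)} (hL : ∀ x ∈ L, x.1 ≠ 1 ∧ x.2 ≠ 1)
    (hsum : heightSum f L = 0) :
    ∃ M : List (LevelGroup f.ker {n : ℤ // n ≠ l} B × B), (∀ y ∈ M, y.1 ≠ 1 ∧ y.2 ≠ 1) ∧
      levelWord ht l L = altProd (LevelGroup.avoiding f B l) (LevelGroup.level l) M ∧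
      M.length = (levels f l L).count l := by
  induction h : L.length using Nat.strong_induction_on generalizing L with | _ n ih =>
  subst h
  rcases eq_or_ne L [] with rfl | hne
  · exact ⟨[], by simp, rfl, rfl⟩
  have hl := add_heightSum_mem_levels (f := f) hne l
  rw [hsum, add_zero] at hl
  obtain ⟨P, x, R, rfl, hP, hx⟩ := exists_eq_append_cons_of_mem_levels hl
  simp only [List.forall_mem_append, List.forall_mem_cons] at hL
  obtain ⟨hLP, hLx, hLR⟩ := hL
  obtain ⟨M, hM, hR, hlen⟩ := ih R.length (by simp; omega) hLR
    (by simp only [heightSum_append, heightSum_cons] at hsum; omega) rfl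
  have hk (k : f.ker) : Coprod.inl k ∈ (LevelGroup.avoiding f B l).range :=
    ⟨Coprod.inl k, LevelGroup.map_inl ..⟩
  obtain ⟨y, hy⟩ : levelWord ht l P * Coprod.inl (kerPart ht (l + heightSum f P) x.1) ∈
      (LevelGroup.avoiding f B l).range :=
    mul_mem (levelWord_mem ht hk fun n hn b ↦
      ⟨LevelGroup.level ⟨n, ne_of_mem_of_not_mem hn hP⟩ b, LevelGroup.map_level ..⟩) (hk _)
  have hy1 : y ≠ 1 := by
    rintro rfl
    exact levelWord_mul_inl_kerPart_ne_one ht hLP hLx.1 hx (by rw [← hy, map_one])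
  refine ⟨(y, x.2) :: M, List.forall_mem_cons.2 ⟨⟨hy1, hLx.2⟩, hM⟩, ?_, ?_⟩
  · rw [altProd_cons, ← hR, hy, levelWord_append, levelWord, hx]
    simp only [mul_assoc]
  · simp [levels_append, hx, hlen, List.count_eq_zero_of_not_mem hP]

end Rewriting

lemma exists_conj_eq {C Λ : Type} [Group C] [Group Λ] {l u : C →* Λ} (hl : Function.Injective l)
    (hu : Function.Injective u) :
    ∃ (Γ : Type) (_ : Group Γ) (o : Λ →* Γ) (τ : Γ), Function.Injective o ∧
      ∀ c, o (u c) = τ * o (l c) * τ⁻¹ := by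
  let φ : l.range ≃* u.range := (MonoidHom.ofInjective hl).symm.trans (MonoidHom.ofInjective hu)
  refine ⟨HNNExtension Λ l.range u.range φ, inferInstance, HNNExtension.of, HNNExtension.t,
    HNNExtension.of_injective φ, fun c ↦ ?_⟩
  have h := HNNExtension.t_mul_of (φ := φ) (MonoidHom.ofInjective hl c)
  rw [MulEquiv.trans_apply, MulEquiv.symm_apply_apply] at h
  exact eq_mul_inv_of_mul_eq h.symm

lemma map_zpow_mulAut_apply {K Γ : Type*} [Group K] [Group Γ] {ρ : K →* Γ} {τ : Γ} {c : MulAut K}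
    (h : ∀ k, ρ (c k) = τ * ρ k * τ⁻¹) (n : ℤ) (k : K) :
    ρ ((c ^ n) k) = τ ^ n * ρ k * (τ ^ n)⁻¹ := by
  induction n generalizing k with
  | zero => simp
  | succ n ih => rw [zpow_add_one, MulAut.mul_apply, ih, h, zpow_add_one]; group
  | pred n ih =>
    have h' : ρ (c⁻¹ k) = τ⁻¹ * ρ k * τ := by
      have hk := h (c⁻¹ k)
      rw [MulAut.apply_inv_self] at hk
      rw [hk]
      group
    rw [zpow_sub_one, MulAut.mul_apply, ih, h', zpow_sub_one]
    group

/-- A form of the two-factor Freiheitssatz, restricted to alternating words of fewer than `n` pairs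
of syllables: each factor of `A ∗ B` embeds in some group in which the word becomes trivial. -/
def FreiheitssatzBelow (n : ℕ) : Prop :=
  ∀ (A B : Type) [Group A] [Group B], LocallyIndicable A → LocallyIndicable B →
    ∀ L : List (A × B), L.length < n → L ≠ [] → (∀ x ∈ L, x.1 ≠ 1 ∧ x.2 ≠ 1) →
      ∃ (Γ : Type) (_ : Group Γ) (α : A →* Γ) (β : B →* Γ),
        Function.Injective α ∧ Function.Injective β ∧ altProd α β L = 1

section

variable {A B : Type} [Group A] [Group B] {f : A →* Multiplicative ℤ} {t : A}
  (ht : f t = .ofAdd 1)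

lemma kerPart_zero_coe (k : f.ker) : kerPart ht 0 k.1 = k :=
  Subtype.ext (by simp [MonoidHom.mem_ker.1 k.2])

lemma kerPart_zero_mul (a b : A) :
    kerPart ht 0 (a * b) =
      kerPart ht 0 a * (MulAut.conjNormal t ^ (f a).toAdd : MulAut f.ker) (kerPart ht 0 b) := by
  rw [← map_zpow]
  refine Subtype.ext ?_
  simp only [Subgroup.coe_mul, MulAut.conjNormal_apply, coe_kerPart, map_mul, toAdd_mul]
  group

lemma exists_hom_extending_ker (ht : f t = .ofAdd 1) {Γ : Type} [Group Γ] {ρ : f.ker →* Γ} {τ : Γ}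
    (h : ∀ k, ρ (MulAut.conjNormal t k) = τ * ρ k * τ⁻¹) :
    ∃ α : A →* Γ, α.comp f.ker.subtype = ρ ∧ α t = τ := by
  refine ⟨MonoidHom.mk' (fun a ↦ ρ (kerPart ht 0 a) * τ ^ (f a).toAdd) fun a b ↦ ?_,
    MonoidHom.ext fun k ↦ ?_, ?_⟩
  · simp only [kerPart_zero_mul, map_mul, map_zpow_mulAut_apply h, toAdd_mul, zpow_add]
    group
  · change ρ (kerPart ht 0 k.1) * τ ^ (f k.1).toAdd = ρ k
    rw [kerPart_zero_coe, MonoidHom.mem_ker.1 k.2, toAdd_one, zpow_zero, mul_one]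
  · have h1 : kerPart ht 0 t = 1 := Subtype.ext (by simp [ht])
    simp [h1, ht]

lemma exists_hom_levelWord_eq_one_of_start (hA : LocallyIndicable A) (hB : LocallyIndicable B)
    (l : ℤ) {L : List (A × B)} (hF : FreiheitssatzBelow L.length)
    (hL : ∀ x ∈ L, x.1 ≠ 1 ∧ x.2 ≠ 1) (hsum : heightSum f L = 0) (hf : ∃ x ∈ L, f x.1 ≠ 1) :
    ∃ (Γ : Type) (_ : Group Γ) (π : LevelGroup f.ker ℤ B →* Γ),
      Function.Injective (π.comp (LevelGroup.avoiding f B l)) ∧ π (levelWord ht l L) = 1 := by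
  obtain ⟨M, hM, hLM, hlen⟩ := exists_levelWord_eq_altProd ht l hL hsum
  have hM_lt : M.length < L.length := by
    obtain ⟨n, hn, hnl⟩ := exists_mem_levels_ne hsum hf l l
    rw [hlen, ← length_levels f l L]
    exact List.count_le_length.lt_of_ne fun h ↦ hnl (List.count_eq_length.1 h n hn).symm
  have hM_ne : M ≠ [] := by
    obtain ⟨x, hx, -⟩ := hf
    have hl := add_heightSum_mem_levels (f := f) (List.ne_nil_of_mem hx) l
    rw [hsum, add_zero] at hl
    exact List.length_pos_iff.1 (hlen ▸ List.count_pos_iff.2 hl)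
  have hW : LocallyIndicable (LevelGroup f.ker {n : ℤ // n ≠ l} B) :=
    (hA.subgroup _).coprod (.coprodI fun _ ↦ hB)
  obtain ⟨Γ, _, a, b, ha, -, hab⟩ := hF _ _ hW hB M hM_lt hM_ne hM
  let π : LevelGroup f.ker ℤ B →* Γ := LevelGroup.lift (a.comp Coprod.inl) fun n ↦
    if h : n ≠ l then a.comp (LevelGroup.level ⟨n, h⟩) else b
  have hπa : π.comp (LevelGroup.avoiding f B l) = a :=
    LevelGroup.hom_ext (MonoidHom.ext fun k ↦ by simp [π, LevelGroup.avoiding]) fun n ↦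
      MonoidHom.ext fun b ↦ by simp [π, LevelGroup.avoiding, n.2]
  have hπb : π.comp (LevelGroup.level l) = b := MonoidHom.ext fun b ↦ by simp [π]
  exact ⟨Γ, _, π, hπa ▸ ha, by rw [hLM, map_altProd, hπa, hπb, hab]⟩

lemma exists_hom_levelWord_eq_one (hA : LocallyIndicable A) (hB : LocallyIndicable B)
    {e l : ℤ} {L : List (A × B)} (hl : l ∈ levels f e L) (hF : FreiheitssatzBelow L.length)
    (hL : ∀ x ∈ L, x.1 ≠ 1 ∧ x.2 ≠ 1) (hsum : heightSum f L = 0) (hf : ∃ x ∈ L, f x.1 ≠ 1) :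
    ∃ (Γ : Type) (_ : Group Γ) (π : LevelGroup f.ker ℤ B →* Γ),
      Function.Injective (π.comp (LevelGroup.avoiding f B l)) ∧ π (levelWord ht e L) = 1 := by
  obtain ⟨P, Q, rfl, hP⟩ : ∃ P Q, L = P ++ Q ∧ e + heightSum f P = l := by
    obtain ⟨P, x, R, rfl, -, hx⟩ := exists_eq_append_cons_of_mem_levels hl
    exact ⟨P ++ [x], R, by simp, by simpa [← add_assoc] using hx⟩
  have hmem (x : A × B) : x ∈ Q ++ P ↔ x ∈ P ++ Q := by simp [or_comm]
  rw [heightSum_append] at hsum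
  obtain ⟨Γ, _, π, hπ, h⟩ := exists_hom_levelWord_eq_one_of_start ht hA hB l (L := Q ++ P)
    (by simpa [add_comm] using hF) (by simpa only [hmem] using hL)
    (by rw [heightSum_append, add_comm, hsum]) (by simpa only [hmem] using hf)
  refine ⟨Γ, _, π, hπ, ?_⟩
  rw [levelWord_append, show l + heightSum f Q = e by omega, map_mul, mul_eq_one_iff_eq_inv] at h
  rw [levelWord_append, hP, map_mul, h, mul_inv_cancel]

lemma exists_hom_levelWord_eq_one₂ (hA : LocallyIndicable A) (hB : LocallyIndicable B)
    {e l m : ℤ} {L : List (A × B)} (hl : l ∈ levels f e L) (hm : m ∈ levels f e L)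
    (hF : FreiheitssatzBelow L.length) (hL : ∀ x ∈ L, x.1 ≠ 1 ∧ x.2 ≠ 1)
    (hsum : heightSum f L = 0) (hf : ∃ x ∈ L, f x.1 ≠ 1) :
    ∃ (Γ : Type) (_ : Group Γ) (π : LevelGroup f.ker ℤ B →* Γ),
      Function.Injective (π.comp (LevelGroup.avoiding f B l)) ∧
      Function.Injective (π.comp (LevelGroup.avoiding f B m)) ∧ π (levelWord ht e L) = 1 := by
  obtain ⟨Γ₁, _, π₁, hπ₁, h₁⟩ := exists_hom_levelWord_eq_one ht hA hB hl hF hL hsum hf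
  obtain ⟨Γ₂, _, π₂, hπ₂, h₂⟩ := exists_hom_levelWord_eq_one ht hA hB hm hF hL hsum hf
  exact ⟨Γ₁ × Γ₂, inferInstance, π₁.prod π₂, .of_comp (f := Prod.fst) hπ₁,
    .of_comp (f := Prod.snd) hπ₂, Prod.ext h₁ h₂⟩

/-- Conjugation by `t` raises levels by one. It identifies the level group of `0, …, m - 1` with
that of `1, …, m`; both embed under `π`, so that it is realised in an HNN extension. -/
lemma exists_shift {m : ℤ} {Λ : Type} [Group Λ] {π : LevelGroup f.ker ℤ B →* Λ}
    (h₀ : Function.Injective (π.comp (LevelGroup.avoiding f B 0)))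
    (hm : Function.Injective (π.comp (LevelGroup.avoiding f B m))) :
    ∃ (Γ : Type) (_ : Group Γ) (o : Λ →* Γ) (τ : Γ), Function.Injective o ∧
      (∀ k : f.ker, o (π (Coprod.inl (MulAut.conjNormal t k))) =
        τ * o (π (Coprod.inl k)) * τ⁻¹) ∧
      ∀ n ∈ Set.Ico 0 m, ∀ b, o (π (LevelGroup.level (n + 1) b)) =
        τ * o (π (LevelGroup.level n b)) * τ⁻¹ := by
  let lower : LevelGroup f.ker (Set.Ico 0 m) B →* LevelGroup f.ker {n : ℤ // n ≠ m} B :=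
    LevelGroup.map (.id _) fun n ↦ ⟨n, n.2.2.ne⟩
  let upper : LevelGroup f.ker (Set.Ico 0 m) B →* LevelGroup f.ker {n : ℤ // n ≠ 0} B :=
    LevelGroup.map (MulAut.conjNormal t : MulAut f.ker).toMonoidHom
      fun n ↦ ⟨n + 1, by have := n.2.1; omega⟩
  have hlower : Function.Injective lower := LevelGroup.map_injective Function.injective_id
    fun x y h ↦ Subtype.ext (Subtype.mk.inj h)
  have hupper : Function.Injective upper := LevelGroup.map_injective (MulEquiv.injective _)
    fun x y h ↦ Subtype.ext (add_right_cancel (Subtype.mk.inj h))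
  obtain ⟨Γ, _, o, τ, ho, h⟩ := exists_conj_eq
    (l := (π.comp (LevelGroup.avoiding f B m)).comp lower)
    (u := (π.comp (LevelGroup.avoiding f B 0)).comp upper) (hm.comp hlower) (h₀.comp hupper)
  refine ⟨Γ, _, o, τ, ho, fun k ↦ ?_, fun n hn b ↦ ?_⟩
  · simpa [lower, upper, LevelGroup.avoiding] using h (Coprod.inl k)
  · simpa [lower, upper, LevelGroup.avoiding] using h (LevelGroup.level ⟨n, hn⟩ b)

lemma exists_hom_agreeing_on_Icc (ht : f t = .ofAdd 1) {m : ℤ} {Λ : Type} [Group Λ]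
    {π : LevelGroup f.ker ℤ B →* Λ}
    (h₀ : Function.Injective (π.comp (LevelGroup.avoiding f B 0)))
    (hm : Function.Injective (π.comp (LevelGroup.avoiding f B m))) :
    ∃ (Γ : Type) (_ : Group Γ) (o : Λ →* Γ) (φ : Coprod A B →* Γ), Function.Injective o ∧
      (∀ k : f.ker, φ (Coprod.inl k.1) = o (π (Coprod.inl k))) ∧
      ∀ n ∈ Set.Icc 0 m, ∀ b, φ (LevelGroup.toCoprod f t (LevelGroup.level n b)) =
        o (π (LevelGroup.level n b)) := by
  obtain ⟨Γ, _, o, τ, ho, hker, hlevel⟩ := exists_shift (t := t) h₀ hm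
  obtain ⟨α, hα, hαt⟩ :=
    exists_hom_extending_ker ht (ρ := (o.comp π).comp Coprod.inl) (τ := τ) hker
  let β : B →* Γ := (o.comp π).comp (LevelGroup.level 0)
  have hβ (n : ℕ) (hn : (n : ℤ) ≤ m) (b : B) :
      o (π (LevelGroup.level (n : ℤ) b)) = τ ^ (n : ℤ) * β b * (τ ^ (n : ℤ))⁻¹ := by
    induction n with
    | zero => simp [β]
    | succ n ih =>
      push_cast at hn ⊢
      rw [hlevel n ⟨by omega, by omega⟩, ih (by omega), zpow_add_one]
      group
  refine ⟨Γ, _, o, Coprod.lift α β, ho, fun k ↦ ?_, fun n hn b ↦ ?_⟩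
  · rw [Coprod.lift_apply_inl]
    exact DFunLike.congr_fun hα k
  · obtain ⟨n, rfl⟩ := Int.eq_ofNat_of_zero_le hn.1
    rw [hβ n hn.2]
    simp [hαt]

theorem exists_hom_altProd_eq_one_of_heightSum_eq_zero (ht : f t = .ofAdd 1)
    (hA : LocallyIndicable A) (hB : LocallyIndicable B) {L : List (A × B)}
    (hF : FreiheitssatzBelow L.length) (hL : ∀ x ∈ L, x.1 ≠ 1 ∧ x.2 ≠ 1)
    (hsum : heightSum f L = 0) (hf : ∃ x ∈ L, f x.1 ≠ 1) :
    ∃ (Γ : Type) (_ : Group Γ) (α : A →* Γ) (β : B →* Γ), altProd α β L = 1 ∧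
      Function.Injective (Coprod.lift (α.comp f.ker.subtype) β) := by
  obtain ⟨e, m, hm, h0L, hmL, hIcc⟩ := exists_levels_mem_Icc hsum hf
  obtain ⟨Λ, _, π, h₀, h₁, hπ⟩ := exists_hom_levelWord_eq_one₂ ht hA hB h0L hmL hF hL hsum hf
  obtain ⟨Γ, _, o, φ, ho, hker, hlevel⟩ := exists_hom_agreeing_on_Icc ht h₀ h₁
  refine ⟨Γ, _, φ.comp Coprod.inl, φ.comp Coprod.inr, ?_, ?_⟩
  · have h : levelWord ht e L ∈ (φ.comp (LevelGroup.toCoprod f t)).eqLocus (o.comp π) :=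
      levelWord_mem ht hker fun n hn ↦ hlevel n (hIcc n hn)
    have h' : φ (LevelGroup.toCoprod f t (levelWord ht e L)) = o (π (levelWord ht e L)) := h
    rwa [LevelGroup.toCoprod_levelWord, hsum, add_zero, hπ, map_one, map_mul, map_mul, map_inv,
      conj_eq_one_iff, map_altProd] at h'
  · have h : Coprod.lift ((φ.comp Coprod.inl).comp f.ker.subtype) (φ.comp Coprod.inr) =
        o.comp ((π.comp (LevelGroup.avoiding f B m)).comp
          (Coprod.lift Coprod.inl (LevelGroup.level ⟨0, hm.ne⟩))) := by
      refine Coprod.hom_ext (MonoidHom.ext fun k ↦ ?_) (MonoidHom.ext fun b ↦ ?_)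
      · simpa [LevelGroup.avoiding] using hker k
      · simpa [LevelGroup.avoiding] using hlevel 0 ⟨le_rfl, hm.le⟩ b
    rw [h]
    exact ho.comp (h₁.comp (LevelGroup.lift_inl_level_injective _))

end

lemma altProd_one_right {A B G : Type*} [Group A] [Group B] [Group G] (α : A →* G)
    (L : List (A × B)) : altProd α 1 L = α (L.map Prod.fst).prod := by
  simp [altProd, map_list_prod, Function.comp_def]

lemma exists_amalgam₂ {A A' B B' Γ : Type} [Group A] [Group A'] [Group B] [Group B'] [Group Γ]
    {u : A' →* A} {v : B' →* B} {α : A' →* Γ} {β : B' →* Γ} (hu : Function.Injective u)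
    (hv : Function.Injective v) (hα : Function.Injective α) (hβ : Function.Injective β) :
    ∃ (Δ : Type) (_ : Group Δ) (i : A →* Δ) (j : B →* Δ) (k : Γ →* Δ), Function.Injective i ∧
      Function.Injective j ∧ i.comp u = k.comp α ∧ j.comp v = k.comp β := by
  obtain ⟨Δ₁, _, i, k₁, hi, hk₁, hik⟩ := exists_amalgam hu hα
  obtain ⟨Δ, _, j, k₂, hj, hk₂, hjk⟩ := exists_amalgam (g := k₁.comp β) hv (hk₁.comp hβ)
  exact ⟨Δ, _, k₂.comp i, j, k₂.comp k₁, hk₂.comp hi, hj, by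
    rw [MonoidHom.comp_assoc, hik, MonoidHom.comp_assoc], hjk⟩

section

variable {A B : Type} [Group A] [Group B]

lemma exists_list_fg_subgroups (L : List (A × B)) :
    ∃ (A' : Subgroup A) (B' : Subgroup B) (L' : List (A' × B')), A'.FG ∧ B'.FG ∧
      L'.map (Prod.map A'.subtype B'.subtype) = L ∧
      (∀ f : A' →* Multiplicative ℤ, (∀ x ∈ L', f x.1 = 1) → f = 1) ∧
      ∀ f : B' →* Multiplicative ℤ, (∀ x ∈ L', f x.2 = 1) → f = 1 := by
  let S : Set A := {a | a ∈ L.map Prod.fst}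
  let T : Set B := {b | b ∈ L.map Prod.snd}
  obtain ⟨L', hL'⟩ : L ∈ Set.range
      (List.map (Prod.map (Subgroup.closure S).subtype (Subgroup.closure T).subtype)) := by
    rw [Set.range_list_map]
    exact fun x hx ↦ ⟨(⟨x.1, Subgroup.subset_closure (List.mem_map_of_mem hx)⟩,
      ⟨x.2, Subgroup.subset_closure (List.mem_map_of_mem hx)⟩), rfl⟩
  refine ⟨_, _, L', (Subgroup.fg_iff _).2 ⟨S, rfl, List.finite_toSet _⟩,
    (Subgroup.fg_iff _).2 ⟨T, rfl, List.finite_toSet _⟩, hL', fun f hf ↦ ?_, fun f hf ↦ ?_⟩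
  all_goals
    refine MonoidHom.eq_of_eqOn_dense Subgroup.closure_closure_coe_preimage fun y hy ↦ ?_
    obtain ⟨x, hx, hxy⟩ := List.mem_map.1 hy
    rw [← hL'] at hx
    obtain ⟨z, hz, rfl⟩ := List.mem_map.1 hx
    exact Subtype.ext hxy ▸ hf z hz

lemma exists_hom_altProd_eq_one_of_heightSum_ne_zero (hB : LocallyIndicable B)
    {f : A →* Multiplicative ℤ} {L : List (A × B)} (hsum : heightSum f L ≠ 0) :
    ∃ (Γ : Type) (_ : Group Γ) (α : A →* Γ) (β : B →* Γ),
      Function.Injective β ∧ altProd α β L = 1 := by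
  let z : A →* FreeGroup Unit := (zpowersHom (FreeGroup Unit) (.of ())).comp f
  obtain ⟨Γ, _, β, g, hβ, h⟩ := hB.exists_solution (ι := Unit)
    (R := fun _ ↦ altProd (Coprod.inr.comp z) Coprod.inl L) fun d ↦ by
      let g : FreeGroup Unit →* Multiplicative ℚ :=
        FreeGroup.lift fun _ ↦ .ofAdd (d () / heightSum f L)
      have hg : g (z (L.map Prod.fst).prod) = .ofAdd (d ()) := by
        rw [MonoidHom.comp_apply, zpowersHom_apply, map_zpow, FreeGroup.lift_apply_of,
          ← ofAdd_zsmul, zsmul_eq_mul]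
        exact congrArg _ (mul_div_cancel₀ (d ()) (Int.cast_ne_zero.2 hsum))
      refine ⟨g, fun _ ↦ ?_⟩
      rw [map_altProd, map_altProd, ← MonoidHom.comp_assoc z, Coprod.snd_comp_inr,
        Coprod.snd_comp_inl, MonoidHom.comp_one, altProd_one_right]
      exact hg
  refine ⟨Γ, _, g.comp z, β, hβ, ?_⟩
  simpa [map_altProd, ← MonoidHom.comp_assoc] using h ()

lemma exists_hom_altProd_eq_one_right_injective [Group.FG A] (hA : LocallyIndicable A)
    (hB : LocallyIndicable B) {L : List (A × B)} (hF : FreiheitssatzBelow L.length) (hne : L ≠ [])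
    (hL : ∀ x ∈ L, x.1 ≠ 1 ∧ x.2 ≠ 1)
    (hgen : ∀ f : A →* Multiplicative ℤ, (∀ x ∈ L, f x.1 = 1) → f = 1) :
    ∃ (Γ : Type) (_ : Group Γ) (α : A →* Γ) (β : B →* Γ),
      Function.Injective β ∧ altProd α β L = 1 := by
  obtain ⟨x, hx⟩ := List.exists_mem_of_ne_nil L hne
  obtain ⟨f, hf⟩ := hA.exists_surjective (i := .id A) fun h ↦ (hL x hx).1 (DFunLike.congr_fun h x.1)
  by_cases hsum : heightSum f L = 0
  · have hfL : ∃ x ∈ L, f x.1 ≠ 1 := by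
      by_contra! h
      exact ne_one_of_surjective hf (hgen f h)
    obtain ⟨t, ht⟩ := hf (.ofAdd 1)
    obtain ⟨Γ, _, α, β, h, hinj⟩ :=
      exists_hom_altProd_eq_one_of_heightSum_eq_zero ht hA hB hF hL hsum hfL
    refine ⟨Γ, _, α, β, ?_, h⟩
    rw [← Coprod.lift_comp_inr (α.comp f.ker.subtype) β]
    exact hinj.comp Coprod.inr_injective
  · exact exists_hom_altProd_eq_one_of_heightSum_ne_zero hB hsum

lemma freiheitssatzBelow_succ {n : ℕ} (hF : FreiheitssatzBelow n) : FreiheitssatzBelow (n + 1) := by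
  intro A B _ _ hA hB L hlen hne hL
  obtain ⟨A', B', L, hA', hB', rfl, hgenA, hgenB⟩ := exists_list_fg_subgroups L
  have _ := (Group.fg_iff_subgroup_fg A').2 hA'
  have _ := (Group.fg_iff_subgroup_fg B').2 hB'
  replace hF : FreiheitssatzBelow L.length := fun A B _ _ hA hB L' hL' ↦
    hF A B hA hB L' (by simp at hlen; omega)
  replace hL : ∀ x ∈ L, x.1 ≠ 1 ∧ x.2 ≠ 1 := fun x hx ↦ by
    simpa using hL _ (List.mem_map_of_mem hx)
  replace hne : L ≠ [] := by simpa using hne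
  obtain ⟨Γ₁, _, α₁, β₁, hβ₁, h₁⟩ := exists_hom_altProd_eq_one_right_injective
    (hA.subgroup A') (hB.subgroup B') hF hne hL hgenA
  obtain ⟨Γ₂, _, β₂, α₂, hα₂, h₂⟩ := exists_hom_altProd_eq_one_right_injective
    (L := (L.map fun x ↦ (x.2⁻¹, x.1⁻¹)).reverse) (hB.subgroup B') (hA.subgroup A')
    (by simpa using hF) (by simpa using hne)
    (by
      simp only [List.mem_reverse, List.forall_mem_map]
      exact fun x hx ↦ ⟨inv_ne_one.2 (hL x hx).2, inv_ne_one.2 (hL x hx).1⟩)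
    (by simpa only [List.mem_reverse, List.forall_mem_map, map_inv, inv_eq_one] using hgenB)
  rw [altProd_reverse_swap_inv, inv_eq_one] at h₂
  obtain ⟨Δ, _, i, j, k, hi, hj, hik, hjk⟩ := exists_amalgam₂ A'.subtype_injective
    B'.subtype_injective (α := α₁.prod α₂) (β := β₁.prod β₂) (.of_comp (f := Prod.snd) hα₂)
    (.of_comp (f := Prod.fst) hβ₁)
  refine ⟨Δ, _, i, j, hi, hj, ?_⟩
  have h : altProd (α₁.prod α₂) (β₁.prod β₂) L = 1 := by
    refine Prod.ext ?_ ?_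
    · exact (map_altProd _ _ (.fst Γ₁ Γ₂) L).trans h₁
    · exact (map_altProd _ _ (.snd Γ₁ Γ₂) L).trans h₂
  rw [altProd_map, hik, hjk, ← map_altProd, h, map_one]

theorem freiheitssatzBelow (n : ℕ) : FreiheitssatzBelow n := by
  induction n with
  | zero => exact fun _ _ _ _ _ _ _ h ↦ absurd h (Nat.not_lt_zero _)
  | succ n ih => exact freiheitssatzBelow_succ ih

end

lemma zpowersHom_injective {G : Type*} [Group G] [IsMulTorsionFree G] {p : G} (hp : p ≠ 1) :
    Function.Injective (zpowersHom G p) :=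
  (injective_iff_map_eq_one _).2 fun _ hn ↦ (IsMulTorsionFree.zpow_eq_one_iff_right hp).1 hn

section HeightEmbedding

lemma norm_translationAction_le {I C : Type*} [Group C] [DecidableEq I] [DecidableEq C] (c : C)
    (w : FreeGroup (I × C)) : (translationAction I C c w).norm ≤ w.norm :=
  calc (translationAction I C c w).norm
    _ = (translationAction I C c (.mk w.toWord)).norm := by rw [FreeGroup.mk_toWord]
    _ ≤ (w.toWord.map fun y ↦ (((Equiv.refl I).prodCongr (Equiv.mulLeft c)) y.1, y.2)).length :=
      FreeGroup.norm_mk_le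
    _ = w.norm := List.length_map _

variable {β : Type} [DecidableEq β]

lemma injective_lift_zpow_letter (x : β) {c : ℤ} (hc : c ≠ 0) : Function.Injective
    (FreeGroup.lift fun z ↦ if z = x then FreeGroup.of x ^ c else FreeGroup.of z) := by
  obtain ⟨Δ, _, i, k, -, hk, h⟩ := exists_amalgam
    (zpowersHom_injective (ofAdd_eq_one.not.2 hc)) (zpowersHom_injective (FreeGroup.of_ne_one x))
  have hroot : i (.ofAdd 1) ^ c = k (.of x) := by
    simpa [← map_zpow, ← ofAdd_zsmul] using DFunLike.congr_fun h (.ofAdd 1)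
  let root : FreeGroup β →* Δ := FreeGroup.lift fun z ↦ if z = x then i (.ofAdd 1) else k (.of z)
  refine .of_comp (f := root) ?_
  rw [← MonoidHom.coe_comp]
  convert hk
  refine FreeGroup.ext_hom _ _ fun z ↦ ?_
  by_cases hz : z = x
  · simp [root, hz, hroot]
  · simp [root, hz]

/-- For `F : FreeGroup β →* ℤ`, the homomorphism to the semidirect product of `ℤ` with the free
group on the letters `(z, n)`, thought of as `z` at height `n`, which sends `x` to `F x` and every
other letter `z` to `(z, 0)` times `F z`. On the kernel of `F` it rewrites a word in terms of the
letters other than `x` at the heights where they occur. Heights are written multiplicatively. -/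
def heightEmbedding (F : FreeGroup β →* Multiplicative ℤ) (x : β) :
    FreeGroup β →* FreeGroup (β × Multiplicative ℤ) ⋊[translationAction β (Multiplicative ℤ)]
      Multiplicative ℤ :=
  FreeGroup.lift fun z ↦ ⟨if z = x then 1 else .of (z, 1), F (.of z)⟩

lemma heightEmbedding_of (F : FreeGroup β →* Multiplicative ℤ) (x z : β) :
    heightEmbedding F x (.of z) = ⟨if z = x then 1 else .of (z, 1), F (.of z)⟩ :=
  FreeGroup.lift_apply_of

lemma heightEmbedding_right (F : FreeGroup β →* Multiplicative ℤ) (x : β) (w : FreeGroup β) :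
    (heightEmbedding F x w).right = F w :=
  DFunLike.congr_fun (FreeGroup.ext_hom (SemidirectProduct.rightHom.comp (heightEmbedding F x)) F
    fun z ↦ congrArg SemidirectProduct.right (heightEmbedding_of F x z)) w

lemma heightEmbedding_injective {F : FreeGroup β →* Multiplicative ℤ} {x : β}
    (hx : F (.of x) ≠ 1) : Function.Injective (heightEmbedding F x) := by
  let conjX : FreeGroup (β × Multiplicative ℤ) →* FreeGroup β :=
    FreeGroup.lift fun q ↦ MulAut.conj (.of x ^ q.2.toAdd) (.of q.1)
  let flatten := SemidirectProduct.lift (φ := translationAction β (Multiplicative ℤ)) conjX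
    (zpowersHom (FreeGroup β) (.of x)) fun c ↦ FreeGroup.ext_hom _ _ fun q ↦ by
      simp [conjX, zpow_add]
  let unshift : FreeGroup β →* FreeGroup β := FreeGroup.lift fun z ↦
    if z = x then .of x else .of z * (.of x ^ (F (.of z)).toAdd)⁻¹
  have hcomp : (unshift.comp flatten).comp (heightEmbedding F x) =
      FreeGroup.lift fun z ↦ if z = x then .of x ^ (F (.of x)).toAdd else .of z := by
    refine FreeGroup.ext_hom _ _ fun z ↦ ?_
    rw [MonoidHom.comp_apply, heightEmbedding_of, FreeGroup.lift_apply_of]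
    by_cases hz : z = x
    · simp [unshift, flatten, SemidirectProduct.lift, hz]
    · simp [unshift, flatten, SemidirectProduct.lift, conjX, hz]
  refine .of_comp (f := unshift.comp flatten) ?_
  rw [← MonoidHom.coe_comp, hcomp]
  exact injective_lift_zpow_letter x (toAdd_eq_zero.not.2 hx)

lemma norm_heightEmbedding_left_le (F : FreeGroup β →* Multiplicative ℤ) (x : β)
    (w : FreeGroup β) :
    (heightEmbedding F x w).left.norm ≤ (w.toWord.filter fun y ↦ y.1 ≠ x).length := by
  have letter (y : β × Bool) :
      (heightEmbedding F x (.mk [y])).left.norm ≤ if y.1 ≠ x then 1 else 0 := by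
    have of_le (z : β) : (heightEmbedding F x (.of z)).left.norm ≤ if z ≠ x then 1 else 0 := by
      rw [heightEmbedding_of]
      split_ifs <;> simp_all
    obtain ⟨z, _ | _⟩ := y
    · have hz : FreeGroup.mk [(z, false)] = (FreeGroup.of z)⁻¹ := rfl
      rw [hz, map_inv, SemidirectProduct.inv_left]
      exact (norm_translationAction_le _ _).trans (FreeGroup.norm_inv_eq.trans_le (of_le z))
    · exact of_le z
  suffices h : ∀ l : List (β × Bool), (heightEmbedding F x (.mk l)).left.norm ≤
      (l.filter fun y ↦ y.1 ≠ x).length by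
    exact (congrArg (fun v ↦ (heightEmbedding F x v).left.norm) FreeGroup.mk_toWord.symm).trans_le
      (h w.toWord)
  intro l
  induction l with
  | nil => exact (congrArg (fun v ↦ v.left.norm) (map_one (heightEmbedding F x))).trans_le (by simp)
  | cons y l ih =>
    have hmk : FreeGroup.mk (y :: l) = FreeGroup.mk [y] * FreeGroup.mk l := by
      rw [FreeGroup.mul_mk, List.singleton_append]
    calc (heightEmbedding F x (.mk (y :: l))).left.norm
      _ ≤ (heightEmbedding F x (.mk [y])).left.norm + (heightEmbedding F x (.mk l)).left.norm := by
        rw [hmk, map_mul, SemidirectProduct.mul_left]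
        exact (FreeGroup.norm_mul_le _ _).trans (add_le_add_right (norm_translationAction_le _ _) _)
      _ ≤ (if y.1 ≠ x then 1 else 0) + (l.filter fun y ↦ y.1 ≠ x).length :=
        add_le_add (letter y) ih
      _ = ((y :: l).filter fun y ↦ y.1 ≠ x).length := by
        by_cases hy : y.1 = x <;> simp [hy, add_comm]

/-- The homomorphism which expresses the elements of the kernel of `F` as words in the letters other
than `x` at the heights where they occur. -/
def kerRewrite (F : FreeGroup β →* Multiplicative ℤ) (x : β) :
    F.ker →* FreeGroup (β × Multiplicative ℤ) where
  toFun w := (heightEmbedding F x w).left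
  map_one' := by simp
  map_mul' w w' := by
    rw [Subgroup.coe_mul, map_mul, SemidirectProduct.mul_left, heightEmbedding_right, w.2, map_one,
      MulAut.one_apply]

lemma kerRewrite_injective {F : FreeGroup β →* Multiplicative ℤ} {x : β}
    (hx : F (.of x) ≠ 1) : Function.Injective (kerRewrite F x) := fun w w' h ↦
  Subtype.ext <| heightEmbedding_injective hx <| SemidirectProduct.ext h <| by
    rw [heightEmbedding_right, heightEmbedding_right, w.2, w'.2]

lemma norm_kerRewrite_le (F : FreeGroup β →* Multiplicative ℤ) (x : β) (w : F.ker) :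
    (kerRewrite F x w).norm ≤ w.1.norm :=
  (norm_heightEmbedding_left_le F x w).trans (List.length_filter_le _ _)

lemma norm_kerRewrite_lt (F : FreeGroup β →* Multiplicative ℤ) {x : β} {w : F.ker}
    (hx : x ∈ lettersOf w.1) : (kerRewrite F x w).norm < w.1.norm := by
  obtain ⟨y, hy, rfl⟩ := List.mem_map.1 hx
  exact (norm_heightEmbedding_left_le F y.1 w).trans_lt
    (List.length_filter_lt_length_iff_exists.2 ⟨y, hy, by simp⟩)

end HeightEmbedding

section ExponentSums

variable {G ι : Type*} [Group G] [Fintype ι]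

lemma exists_hom_rat_of_det_ne_zero [DecidableEq ι] {e : ι → G →* Multiplicative ℤ} {u : ι → G}
    (h : (Matrix.of fun i k ↦ (e i (u k)).toAdd).det ≠ 0) (d : ι → ℚ) :
    ∃ E : G →* Multiplicative ℚ, ∀ k, E (u k) = .ofAdd (d k) := by
  let M : Matrix ι ι ℚ := (Matrix.of fun i k ↦ (e i (u k)).toAdd).map (↑)
  have hM : IsUnit M := by
    rw [Matrix.isUnit_iff_isUnit_det, ← Int.cast_det]
    exact (Int.cast_ne_zero.2 h).isUnit
  obtain ⟨q, hq⟩ := Matrix.vecMul_surjective_iff_isUnit.2 hM d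
  refine ⟨∏ i, (zpowersHom _ (.ofAdd (q i))).comp (e i), fun k ↦ ?_⟩
  have hk : d k = ∑ i, q i * M i k := (congrFun hq k).symm
  rw [hk, MonoidHom.finsetProd_apply, ofAdd_sum]
  refine Finset.prod_congr rfl fun i _ ↦ ?_
  rw [MonoidHom.comp_apply, zpowersHom_apply, ← ofAdd_zsmul, zsmul_eq_mul, mul_comm]
  rfl

lemma exists_prod_zpow_eq_one_of_det_eq_zero [DecidableEq ι] {e : ι → G →* Multiplicative ℤ}
    {u : ι → G}
    (h : (Matrix.of fun i k ↦ (e i (u k)).toAdd).det = 0) :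
    ∃ c : ι → ℤ, c ≠ 0 ∧ ∀ k, (∏ i, e i ^ c i) (u k) = 1 := by
  obtain ⟨c, hc, hcM⟩ := Matrix.exists_vecMul_eq_zero_iff.2 h
  refine ⟨c, hc, fun k ↦ ?_⟩
  have hk : ∑ i, c i * (e i (u k)).toAdd = 0 := congrFun hcM k
  rw [← toAdd_eq_zero, ← hk, MonoidHom.finsetProd_apply, toAdd_prod]
  simp

/-- The exponent sum of the letter `y`. -/
def exponentSum {β : Type*} [DecidableEq β] (y : β) : FreeGroup β →* Multiplicative ℤ :=
  FreeGroup.lift (Pi.mulSingle y (.ofAdd 1))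

lemma prod_exponentSum_zpow_of {β : Type*} [DecidableEq β] {y : ι → β} (hy : Function.Injective y)
    (c : ι → ℤ) (i : ι) : (∏ k, exponentSum (y k) ^ c k) (.of (y i)) = .ofAdd (c i) := by
  rw [MonoidHom.finsetProd_apply, Finset.prod_eq_single i]
  · simp [exponentSum, ← ofAdd_zsmul]
  · intro k _ hk
    simp [exponentSum, hy.ne hk.symm]
  · simp

end ExponentSums

lemma exists_hom_eq_and_altProd_eq_one {A H S β : Type} [Group A] [Group H] [Group S]
    (hS : LocallyIndicable S) (c : S) (i : H →* S) (j : A →* FreeGroup β) {p : A}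
    {L : List (A × H)} (h : ∀ d : Fin 2 → ℚ, ∃ E : FreeGroup β →* Multiplicative ℚ,
      ∀ k, E (![j p, j (L.map Prod.fst).prod] k) = .ofAdd (d k)) :
    ∃ (Γ : Type) (_ : Group Γ) (s : S →* Γ) (f : FreeGroup β →* Γ), Function.Injective s ∧
      f (j p) = s c ∧ altProd (f.comp j) (s.comp i) L = 1 := by
  let R : Fin 2 → Coprod S (FreeGroup β) :=
    ![Coprod.inr (j p) * Coprod.inl c⁻¹, altProd (Coprod.inr.comp j) (Coprod.inl.comp i) L]
  have hR (k : Fin 2) : (R k).snd = ![j p, j (L.map Prod.fst).prod] k := by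
    fin_cases k
    · simp [R]
    · simp [R, map_altProd, ← MonoidHom.comp_assoc, altProd_one_right]
  obtain ⟨Γ, _, s, f, hs, hRs⟩ := hS.exists_solution (R := R) (by simpa only [hR] using h)
  refine ⟨Γ, _, s, f, hs, ?_, ?_⟩
  · simpa [R, mul_inv_eq_one] using hRs 0
  · simpa [R, map_altProd, ← MonoidHom.comp_assoc] using hRs 1

section CyclicFreiheitssatz

/-- The Freiheitssatz for the subgroup `⟨p⟩ ∗ H` of `A ∗ H` and the relator `a₁ h₁ ⋯ aₙ hₙ` given by
the list `L` of the pairs `(aᵢ, hᵢ)`: some group satisfies the relation while `⟨p⟩ ∗ H` still embeds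
in it. -/
def CyclicFreiheitssatz {A H : Type} [Group A] [Group H] (p : A) (L : List (A × H)) : Prop :=
  ∃ (Γ : Type) (_ : Group Γ) (α : A →* Γ) (η : H →* Γ), altProd α η L = 1 ∧
    Function.Injective (Coprod.lift (zpowersHom Γ (α p)) η)

namespace CyclicFreiheitssatz

variable {A H : Type} [Group A] [Group H]

lemma of_exists_hom_rat {β : Type} (hH : LocallyIndicable H) {p : A} {L : List (A × H)}
    (j : A →* FreeGroup β) (h : ∀ d : Fin 2 → ℚ, ∃ E : FreeGroup β →* Multiplicative ℚ,
      ∀ k, E (![j p, j (L.map Prod.fst).prod] k) = .ofAdd (d k)) : CyclicFreiheitssatz p L := by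
  obtain ⟨Γ, _, s, f, hs, hp, hrel⟩ := exists_hom_eq_and_altProd_eq_one
    (LocallyIndicable.of_isMulTorsionFree.coprod hH) (Coprod.inl (Multiplicative.ofAdd (1 : ℤ)))
    Coprod.inr j h
  refine ⟨Γ, _, f.comp j, s.comp Coprod.inr, hrel, ?_⟩
  convert hs
  exact Coprod.hom_ext (MonoidHom.ext_mint (by simpa using hp)) (Coprod.lift_comp_inr _ _)

lemma of_heightSum_eq_zero (hA : LocallyIndicable A) (hH : LocallyIndicable H) {p : A}
    (hp : Function.Injective (zpowersHom A p)) {L : List (A × H)}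
    (hL : ∀ x ∈ L, x.1 ≠ 1 ∧ x.2 ≠ 1) {f : A →* Multiplicative ℤ} (hfp : f p = 1)
    (hsum : f (L.map Prod.fst).prod = 1) (hf : ∃ x ∈ L, f x.1 ≠ 1) : CyclicFreiheitssatz p L := by
  obtain ⟨x, hx, hfx⟩ := hf
  obtain ⟨g, d, hg, hd, hgd⟩ := exists_surjective_zpow_eq (f := f) fun h ↦ hfx (by simp [h])
  have hfg (a : A) : f a = 1 ↔ g a = 1 := by
    rw [hgd, IsMulTorsionFree.zpow_eq_one_iff_left hd]
  obtain ⟨t, ht⟩ := hg (.ofAdd 1)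
  obtain ⟨Γ, _, α, η, hrel, hinj⟩ := exists_hom_altProd_eq_one_of_heightSum_eq_zero ht hA hH
    (freiheitssatzBelow _) hL (toAdd_eq_zero.2 ((hfg _).1 hsum)) ⟨x, hx, (hfg _).not.1 hfx⟩
  let p' : g.ker := ⟨p, (hfg p).1 hfp⟩
  have hp' : Function.Injective (zpowersHom g.ker p') := .of_comp (f := g.ker.subtype) (by
    convert hp
    ext n
    simp [p'])
  refine ⟨Γ, _, α, η, hrel, ?_⟩
  convert hinj.comp (coprod_map_id_injective hp' (B := H))
  rw [← MonoidHom.coe_comp]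
  congr 1
  refine Coprod.hom_ext (MonoidHom.ext_mint ?_) ?_
  · simp [p']
  · ext; simp

lemma map {A' : Type} [Group A'] {u : A' →* A} (hu : Function.Injective u)
    (hA' : LocallyIndicable A') (hH : LocallyIndicable H) {p : A'} {L : List (A' × H)}
    (hne : L ≠ []) (hL : ∀ x ∈ L, x.1 ≠ 1 ∧ x.2 ≠ 1) (h : CyclicFreiheitssatz p L) :
    CyclicFreiheitssatz (u p) (L.map (Prod.map u (MonoidHom.id H))) := by
  obtain ⟨Γ₁, _, α₁, η₁, hrel₁, hinj₁⟩ := h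
  obtain ⟨Γ₂, _, α₂, η₂, hα₂, -, hrel₂⟩ :=
    freiheitssatzBelow _ A' H hA' hH L (Nat.lt_succ_self _) hne hL
  have hrel : altProd (α₁.prod α₂) (η₁.prod η₂) L = 1 := by
    refine Prod.ext ?_ ?_
    · exact (map_altProd _ _ (.fst Γ₁ Γ₂) L).trans hrel₁
    · exact (map_altProd _ _ (.snd Γ₁ Γ₂) L).trans hrel₂
  have hinj : Function.Injective (Coprod.lift (zpowersHom _ (α₁.prod α₂ p)) (η₁.prod η₂)) := by
    refine .of_comp (f := MonoidHom.fst Γ₁ Γ₂) ?_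
    convert hinj₁
    rw [← MonoidHom.coe_comp]
    congr 1
    refine Coprod.hom_ext (MonoidHom.ext_mint ?_) ?_
    · simp
    · ext; simp
  obtain ⟨Δ, _, i, k, -, hk, hik⟩ := exists_amalgam hu (g := α₁.prod α₂)
    (.of_comp (f := MonoidHom.snd Γ₁ Γ₂) hα₂)
  refine ⟨Δ, _, i, k.comp (η₁.prod η₂), ?_, ?_⟩
  · rw [altProd_map, hik, MonoidHom.comp_id, ← map_altProd, hrel, map_one]
  · convert hk.comp hinj
    rw [← MonoidHom.coe_comp]
    congr 1
    refine Coprod.hom_ext (MonoidHom.ext_mint ?_) ?_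
    · simpa using DFunLike.congr_fun hik p
    · ext; simp

end CyclicFreiheitssatz

end CyclicFreiheitssatz

section Letters

lemma mem_of_forall_lettersOf {β : Type} [DecidableEq β] {K : Subgroup (FreeGroup β)}
    {w : FreeGroup β} (h : ∀ z ∈ lettersOf w, .of z ∈ K) : w ∈ K := by
  rw [← FreeGroup.lift_of_apply w, ← FreeGroup.mk_toWord (x := w), FreeGroup.lift_mk]
  refine Subgroup.list_prod_mem _ (List.forall_mem_map.2 ?_)
  rintro ⟨z, b⟩ hz
  have hzK : FreeGroup.of z ∈ K := h z (List.mem_map_of_mem hz)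
  cases b
  · exact inv_mem hzK
  · exact hzK

lemma ne_one_of_forall_ne_pow {G : Type*} [Group G] {p : G}
    (hp : ∀ (s : G) (k : ℕ), 2 ≤ k → p ≠ s ^ k) : p ≠ 1 := fun h ↦
  hp 1 2 le_rfl (h.trans (one_pow 2).symm)

lemma le_zpowers_of_forall_ne_pow {G : Type*} [Group G] {K : Subgroup G} [IsCyclic K] {p : G}
    (hp : ∀ (s : G) (k : ℕ), 2 ≤ k → p ≠ s ^ k) (hpK : p ∈ K) : K ≤ Subgroup.zpowers p := by
  obtain ⟨s, hs⟩ := K.isCyclic_iff_exists_zpowers_eq_top.1 ‹_›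
  subst hs
  obtain ⟨k, rfl⟩ := hpK
  have hk_lt : k.natAbs < 2 := by
    by_contra! h
    obtain hk | hk := Int.natAbs_eq k
    · exact hp s k.natAbs h (by rw [← zpow_natCast, ← hk])
    · exact hp s⁻¹ k.natAbs h (by rw [← zpow_natCast, inv_zpow', ← hk])
  have hk_ne : k ≠ 0 := by
    rintro rfl
    exact ne_one_of_forall_ne_pow hp (zpow_zero s)
  obtain rfl | rfl : k = 1 ∨ k = -1 := by omega
  all_goals simp

lemma subgroupComap_injective {G G' : Type*} [Group G] [Group G'] {f : G →* G'}
    (hf : Function.Injective f) (K : Subgroup G') : Function.Injective (f.subgroupComap K) :=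
  fun _ _ h ↦ Subtype.ext (hf (Subtype.mk.inj h))

variable {A β : Type} [Group A] [DecidableEq β] {j : A →* FreeGroup β}

lemma exists_injective_forall_mem_lettersOf (hj : Function.Injective j) {p a : A}
    (hp : ∀ (s : A) (k : ℕ), 2 ≤ k → p ≠ s ^ k) (ha : a ∉ Subgroup.zpowers p) :
    ∃ y : Fin 2 → β, Function.Injective y ∧ ∀ i, y i ∈ lettersOf (j p) ++ lettersOf (j a) := by
  by_contra! h
  have hletters (y z : β) (hy : y ∈ lettersOf (j p) ++ lettersOf (j a))
      (hz : z ∈ lettersOf (j p) ++ lettersOf (j a)) : y = z := by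
    by_contra hyz
    obtain ⟨i, hi⟩ := h ![y, z]
      (by simpa [Function.Injective, Fin.forall_fin_two] using ⟨hyz, Ne.symm hyz⟩)
    fin_cases i
    · exact hi hy
    · exact hi hz
  have hp_ne : lettersOf (j p) ≠ [] := by
    simpa [lettersOf, map_eq_one_iff j hj] using ne_one_of_forall_ne_pow hp
  obtain ⟨z, hz⟩ := List.exists_mem_of_ne_nil _ hp_ne
  have hmem (b : A) (hb : lettersOf (j b) ⊆ lettersOf (j p) ++ lettersOf (j a)) :
      b ∈ (Subgroup.zpowers (FreeGroup.of z)).comap j :=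
    Subgroup.mem_comap.2 <| mem_of_forall_lettersOf fun y hy ↦ by
      rw [← hletters z y (List.mem_append_left _ hz) (hb hy)]
      exact Subgroup.mem_zpowers _
  have : IsCyclic ((Subgroup.zpowers (FreeGroup.of z)).comap j) :=
    isCyclic_of_injective _ (subgroupComap_injective hj _)
  exact ha (le_zpowers_of_forall_ne_pow hp (hmem p (List.subset_append_left _ _))
    (hmem a (List.subset_append_right _ _)))

/-- The total length of the words that represent the elements of `l`. -/
def totalNorm (j : A →* FreeGroup β) (l : List A) : ℕ := (l.map fun a ↦ (j a).norm).sum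

lemma totalNorm_kerRewrite_lt (F : FreeGroup β →* Multiplicative ℤ) {x : β}
    {l : List (F.ker.comap j)} (hx : ∃ a ∈ l, x ∈ lettersOf (j a)) :
    totalNorm ((kerRewrite F x).comp (j.subgroupComap F.ker)) l <
      totalNorm j (l.map (F.ker.comap j).subtype) := by
  obtain ⟨a, ha, hxa⟩ := hx
  rw [totalNorm, totalNorm, List.map_map]
  exact List.sum_lt_sum _ _ (fun b _ ↦ norm_kerRewrite_le F x (j.subgroupComap F.ker b))
    ⟨a, ha, norm_kerRewrite_lt F (w := j.subgroupComap F.ker a) hxa⟩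

end Letters

namespace CyclicFreiheitssatz

variable {A H β : Type} [Group A] [Group H] {j : A →* FreeGroup β}

lemma or_exists_hom_ne_one (hH : LocallyIndicable H) (p : A) (L : List (A × H)) {y : Fin 2 → β}
    (hy : Function.Injective y) : CyclicFreiheitssatz p L ∨ ∃ F : FreeGroup β →* Multiplicative ℤ,
      F (j p) = 1 ∧ F (j (L.map Prod.fst).prod) = 1 ∧ ∃ i, F (.of (y i)) ≠ 1 := by
  classical
  by_cases hdet : (Matrix.of fun i k ↦
      (exponentSum (y i) (![j p, j (L.map Prod.fst).prod] k)).toAdd).det = 0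
  · obtain ⟨c, hc, hF⟩ := exists_prod_zpow_eq_one_of_det_eq_zero hdet
    obtain ⟨i, hi⟩ := Function.ne_iff.1 hc
    refine .inr ⟨_, hF 0, hF 1, i, ?_⟩
    rw [prod_exponentSum_zpow_of hy]
    exact ofAdd_eq_one.not.2 hi
  · exact .inl (of_exists_hom_rat hH j (exists_hom_rat_of_det_ne_zero hdet))

end CyclicFreiheitssatz

theorem cyclicFreiheitssatz {A H β : Type} [Group A] [Group H]
    {j : A →* FreeGroup β} (hj : Function.Injective j) (hH : LocallyIndicable H) {p : A}
    (hp : ∀ (s : A) (k : ℕ), 2 ≤ k → p ≠ s ^ k) {L : List (A × H)}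
    (hL : ∀ x ∈ L, x.1 ≠ 1 ∧ x.2 ≠ 1) (hx : ∃ x ∈ L, x.1 ∉ Subgroup.zpowers p) :
    CyclicFreiheitssatz p L := by
  classical
  induction h : totalNorm j (p :: L.map Prod.fst) using Nat.strong_induction_on
    generalizing A β with
  | _ n ih =>
  subst h
  obtain ⟨a, haL, hap⟩ := hx
  obtain ⟨y, hy, hy_mem⟩ := exists_injective_forall_mem_lettersOf hj hp hap
  obtain h | ⟨F, hFp, hFL, i, hi⟩ := CyclicFreiheitssatz.or_exists_hom_ne_one (j := j) hH p L hy
  · exact h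
  have hA : LocallyIndicable A := .of_injective hj (.freeGroup β)
  by_cases hF : ∃ x ∈ L, F (j x.1) ≠ 1
  · have : IsMulTorsionFree A := hj.isMulTorsionFree
    exact .of_heightSum_eq_zero (f := F.comp j) hA hH
      (zpowersHom_injective (ne_one_of_forall_ne_pow hp)) hL hFp hFL hF
  push Not at hF
  let K := F.ker.comap j
  obtain ⟨L, rfl⟩ : L ∈ Set.range (List.map (Prod.map K.subtype (MonoidHom.id H))) := by
    rw [Set.range_list_map]
    exact fun x hx ↦ ⟨(⟨x.1, hF x hx⟩, x.2), rfl⟩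
  obtain ⟨⟨a, b⟩, haL', rfl⟩ := List.mem_map.1 haL
  replace hL : ∀ x ∈ L, x.1 ≠ 1 ∧ x.2 ≠ 1 := fun x hx ↦ by
    simpa using hL _ (List.mem_map_of_mem hx)
  have hnorm := totalNorm_kerRewrite_lt F (x := y i) (l := ⟨p, hFp⟩ :: L.map Prod.fst) (by
    obtain h | h := List.mem_append.1 (hy_mem i)
    · exact ⟨⟨p, hFp⟩, List.mem_cons_self, h⟩
    · exact ⟨a, List.mem_cons_of_mem _ (List.mem_map_of_mem haL'), h⟩)
  refine .map (p := (⟨p, hFp⟩ : K)) K.subtype_injective (hA.subgroup K) hH (List.ne_nil_of_mem haL')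
    hL (ih _ (hnorm.trans_eq (by simp [Function.comp_def, K])) ?_ ?_ hL ?_ (by congr!))
  · exact (kerRewrite_injective hi).comp (subgroupComap_injective hj _)
  · exact fun s k hk h ↦ hp s k hk (congrArg K.subtype h)
  · exact ⟨_, haL', fun ⟨c, hc⟩ ↦ hap ⟨c, congrArg K.subtype hc⟩⟩

section

variable {A H G : Type*} [Group A] [Group H] [Group G] {α : A →* G} {η : H →* G}

lemma altProd_mem {K : Subgroup G} {L : List (A × H)} (hL : ∀ x ∈ L, α x.1 ∈ K ∧ η x.2 ∈ K) :
    altProd α η L ∈ K :=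
  Subgroup.list_prod_mem _ (List.forall_mem_map.2 fun x hx ↦ mul_mem (hL x hx).1 (hL x hx).2)

lemma isConj_altProd_append_comm (α : A →* G) (η : H →* G)
    (P Q : List (A × H)) :
    IsConj (altProd α η (P ++ Q)) (altProd α η (Q ++ P)) :=
  isConj_iff.2 ⟨altProd α η Q, by simp [altProd_append, mul_assoc]⟩

lemma range_lift_zpowersHom (p : G) :
    (Coprod.lift (zpowersHom G p) η).range = Subgroup.closure ({p} ∪ Set.range η) := by
  rw [Coprod.range_lift, Subgroup.closure_union, ← Subgroup.zpowers_eq_closure,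
    ← MonoidHom.coe_range, Subgroup.closure_eq]
  rfl

lemma injOn_mk'_normalClosure {Γ : Type*} [Group Γ] {φ : G →* Γ} {r : G} (hr : φ r = 1)
    {s : Set G} (hφ : s.InjOn φ) :
    s.InjOn (QuotientGroup.mk' (Subgroup.normalClosure {r})) := by
  have hker : Subgroup.normalClosure {r} ≤ φ.ker :=
    Subgroup.normalClosure_le_normal (Set.singleton_subset_iff.2 hr)
  exact .of_comp (g := QuotientGroup.lift _ φ hker) hφ

lemma exists_altProd_eq (r : Coprod A H) :
    ∃ L : List (A × H), altProd Coprod.inl Coprod.inr L = r := by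
  induction r using Coprod.induction_on with
  | inl a => exact ⟨[(a, 1)], by simp⟩
  | inr h => exact ⟨[(1, h)], by simp⟩
  | mul x y hx hy =>
    obtain ⟨L, rfl⟩ := hx
    obtain ⟨M, rfl⟩ := hy
    exact ⟨L ++ M, altProd_append ..⟩

lemma left_or_exists_altProd_eq_altProd_cons (α : A →* G) (η : H →* G) (a : A)
    (L : List (A × H)) :
    (∃ a', α a' = altProd α η ((a, 1) :: L)) ∨
      ∃ M : List (A × H), M.length ≤ L.length ∧ altProd α η M = altProd α η ((a, 1) :: L) := by
  match L with
  | [] => exact .inl ⟨a, by simp⟩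
  | y :: R => exact .inr ⟨(a * y.1, y.2) :: R, le_rfl, by simp [mul_assoc]⟩

lemma right_or_exists_altProd_eq_altProd_concat (α : A →* G) (η : H →* G) (h : H)
    (L : List (A × H)) :
    (∃ h', η h' = altProd α η (L ++ [(1, h)])) ∨
      ∃ M : List (A × H), M.length ≤ L.length ∧ altProd α η M = altProd α η (L ++ [(1, h)]) := by
  obtain rfl | ⟨R, y, rfl⟩ := L.eq_nil_or_concat
  · exact .inl ⟨h, by simp⟩
  · exact .inr ⟨R ++ [(y.1, y.2 * h)], by simp, by simp [altProd_append, mul_assoc]⟩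

lemma exists_length_lt_isConj_altProd (α : A →* G) (η : H →* G) {L : List (A × H)}
    (hL : ∃ x ∈ L, x.1 = 1 ∨ x.2 = 1) :
    (∃ a, IsConj (α a) (altProd α η L)) ∨ (∃ h, IsConj (η h) (altProd α η L)) ∨
      ∃ M : List (A × H), M.length < L.length ∧ IsConj (altProd α η M) (altProd α η L) := by
  obtain ⟨⟨a, h⟩, hx, rfl | rfl⟩ := hL <;> obtain ⟨P, Q, rfl⟩ := List.append_of_mem hx
  · have hconj : IsConj (altProd α η (Q ++ P ++ [(1, h)])) (altProd α η (P ++ (1, h) :: Q)) := by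
      rw [List.append_assoc, List.append_cons P _ Q]
      exact isConj_altProd_append_comm α η Q (P ++ [(1, h)])
    obtain ⟨h', hh'⟩ | ⟨M, hM, hM'⟩ :=
      right_or_exists_altProd_eq_altProd_concat α η h (Q ++ P)
    · exact .inr (.inl ⟨h', hh' ▸ hconj⟩)
    · exact .inr (.inr ⟨M, by grind, hM' ▸ hconj⟩)
  · have hconj : IsConj (altProd α η ((a, 1) :: (Q ++ P))) (altProd α η (P ++ (a, 1) :: Q)) :=
      isConj_altProd_append_comm α η ((a, 1) :: Q) P
    obtain ⟨a', ha'⟩ | ⟨M, hM, hM'⟩ :=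
      left_or_exists_altProd_eq_altProd_cons α η a (Q ++ P)
    · exact .inl ⟨a', ha' ▸ hconj⟩
    · exact .inr (.inr ⟨M, by grind, hM' ▸ hconj⟩)

lemma isConj_inl_or_inr_or_altProd (r : Coprod A H) :
    (∃ a : A, IsConj (Coprod.inl a) r) ∨ (∃ h : H, IsConj (Coprod.inr h) r) ∨
      ∃ L : List (A × H), (∀ x ∈ L, x.1 ≠ 1 ∧ x.2 ≠ 1) ∧
        IsConj (altProd Coprod.inl Coprod.inr L) r := by
  obtain ⟨L, rfl⟩ := exists_altProd_eq r
  induction hn : L.length using Nat.strong_induction_on generalizing L with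
  | _ n ih =>
  subst hn
  by_cases hL : ∀ x ∈ L, x.1 ≠ 1 ∧ x.2 ≠ 1
  · exact .inr (.inr ⟨L, hL, .refl _⟩)
  simp only [not_forall, not_and_or, not_not, exists_prop] at hL
  obtain h | h | ⟨M, hM, hML⟩ := exists_length_lt_isConj_altProd
    (Coprod.inl : A →* Coprod A H) Coprod.inr hL
  · exact .inl h
  · exact .inr (.inl h)
  · exact (ih _ hM M rfl).imp (.imp fun _ h ↦ h.trans hML)
      (.imp (.imp fun _ h ↦ h.trans hML) (.imp fun _ h ↦ ⟨h.1, h.2.trans hML⟩))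

end

theorem embed_cyclic_times_H_general {α H : Type} [Group H] (hH : LocallyIndicable H)
    (p : FreeGroup α) (hp : ∀ (s : FreeGroup α) (k : ℕ), 2 ≤ k → p ≠ s ^ k)
    (r : Coprod (FreeGroup α) H)
    (hrA : ¬ ∃ a : FreeGroup α, IsConj (Coprod.inl a) r)
    (hrH : ¬ ∃ h : H, IsConj (Coprod.inr h) r)
    (hrS : ¬ ∃ s ∈ Subgroup.closure
        ({Coprod.inl p} ∪ Set.range (Coprod.inr : H →* Coprod (FreeGroup α) H) :
          Set (Coprod (FreeGroup α) H)), IsConj s r) :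
    Set.InjOn (QuotientGroup.mk' (Subgroup.normalClosure {r}))
      (Subgroup.closure
        ({Coprod.inl p} ∪ Set.range (Coprod.inr : H →* Coprod (FreeGroup α) H) :
          Set (Coprod (FreeGroup α) H))) := by
  classical
  rw [← range_lift_zpowersHom] at hrS ⊢
  obtain ⟨L, hL, hLr⟩ := ((isConj_inl_or_inr_or_altProd r).resolve_left hrA).resolve_left hrH
  have hx : ∃ x ∈ L, x.1 ∉ Subgroup.zpowers p := by
    by_contra! h
    refine hrS ⟨_, altProd_mem fun x hx ↦ ⟨?_, ⟨Coprod.inr x.2, by simp⟩⟩, hLr⟩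
    obtain ⟨n, hn⟩ := h x hx
    exact ⟨Coprod.inl (.ofAdd n), by simp [← hn]⟩
  obtain ⟨Γ, _, a, η, hrel, hinj⟩ :=
    cyclicFreiheitssatz (j := .id (FreeGroup α)) Function.injective_id hH hp hL hx
  have hr : Coprod.lift a η r = 1 := by
    have hconj := (Coprod.lift a η).map_isConj hLr
    rwa [map_altProd, Coprod.lift_comp_inl, Coprod.lift_comp_inr, hrel, isConj_one_right] at hconj
  refine injOn_mk'_normalClosure hr (Function.Injective.injOn_range ?_)
  have hcomp : (Coprod.lift a η).comp (Coprod.lift (zpowersHom _ (Coprod.inl p)) Coprod.inr) =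
      Coprod.lift (zpowersHom _ (a p)) η :=
    Coprod.hom_ext (MonoidHom.ext_mint (by simp)) (by ext; simp)
  rwa [← MonoidHom.coe_comp, hcomp]

/-- **Lemma.** Let `H` be locally indicable, `A` free with basis `𝒜`, and
`p = v⁻¹gv` where `v, g` use disjoint sets of basis letters, `g` cyclically reduced
and not a proper power. If `r ∈ A ∗ H` is not conjugate into `A`, `H` or `⟨p⟩ ∗ H`,
then `⟨p⟩ ∗ H` embeds canonically into `(A ∗ H)/⟨⟨r⟩⟩`. -/
theorem embed_cyclic_times_H {α H : Type} [DecidableEq α] [Group H]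
    (hH : LocallyIndicable H)
    (v g : FreeGroup α)
    (hdisj : ∀ x : α, x ∈ lettersOf v → x ∉ lettersOf g)
    (hcr : CyclicallyReduced g)
    (hnp : ∀ (s : FreeGroup α) (k : ℕ), 2 ≤ k → g ≠ s ^ k)
    (r : Coprod (FreeGroup α) H)
    (hrA : ¬ ∃ a : FreeGroup α, IsConj (Coprod.inl a) r)
    (hrH : ¬ ∃ h : H, IsConj (Coprod.inr h) r)
    (hrS : ¬ ∃ s ∈ Subgroup.closure
        ({Coprod.inl (v⁻¹ * g * v)} ∪ Set.range (Coprod.inr : H →* Coprod (FreeGroup α) H) :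
          Set (Coprod (FreeGroup α) H)), IsConj s r) :
    Set.InjOn (QuotientGroup.mk' (Subgroup.normalClosure {r}))
      (Subgroup.closure
        ({Coprod.inl (v⁻¹ * g * v)} ∪ Set.range (Coprod.inr : H →* Coprod (FreeGroup α) H) :
          Set (Coprod (FreeGroup α) H))) :=
  embed_cyclic_times_H_general hH _ (fun s k hk h ↦ hnp (v * s * v⁻¹) k hk (by
    rw [conj_pow, ← h]; group)) r hrA hrH hrS
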